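/- arXiv:2204.10671 — 4 statements merged into one kernel-verified Lean document; each statement's English description precedes it below -/
import Mathlib

section
/- There is a constant c such that for every integer q ≥ 1 there is a quantum OBDD of width at most c·q² representing the total Boolean function REQ_q with bounded error; namely, it accepts every input with REQ_q = 1 with probability 1 and accepts every input with REQ_q = 0 with probability at most 1/3. In terms of the input length n = 2q(⌈log₂ 2q⌉+1), the width is O(n²/(log n)²). -/
set_option maxHeartbeats 1000000
/-- `binVal l a = Σ_{j=1}^l a_j 2^{l-j}` (a₁ is the most significant bit). -/
def binVal (l : ℕ) (a : Fin l → Bool) : ℕ :=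
  ∑ j : Fin l, if a j then 2 ^ (l - 1 - (j : ℕ)) else 0
/-- A quantum OBDD of width `w` over `n` Boolean variables. -/
structure QOBDD (n w : ℕ) where
  ord : Equiv.Perm (Fin n)
  G : Fin n → Bool → Matrix.unitaryGroup (Fin w) ℂ
  start : Fin w
  acc : Finset (Fin w)

namespace QOBDD

noncomputable def finalVec {n w : ℕ} (M : QOBDD n w) (x : Fin n → Bool) : Fin w → ℂ :=
  (List.finRange n).foldl
    (fun ψ i => Matrix.mulVec (M.G i (x (M.ord i)) : Matrix (Fin w) (Fin w) ℂ) ψ)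
    (Pi.single M.start 1)

noncomputable def acceptProb {n w : ℕ} (M : QOBDD n w) (x : Fin n → Bool) : ℝ :=
  ∑ j ∈ M.acc, Complex.normSq (M.finalVec x j)

/-- `M` represents the total function `f` with margin `ε`. -/
def Represents {n w : ℕ} (M : QOBDD n w) (ε : ℝ) (f : (Fin n → Bool) → Bool) : Prop :=
  ∀ x, (f x = true → 1 / 2 + ε ≤ M.acceptProb x) ∧
       (f x = false → M.acceptProb x ≤ 1 / 2 - ε)

/-- `M` represents the partial function `F` with margin `ε`. -/
def RepresentsPartial {n w : ℕ} (M : QOBDD n w) (ε : ℝ)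
    (F : (Fin n → Bool) → Option Bool) : Prop :=
  ∀ x, (F x = some true → 1 / 2 + ε ≤ M.acceptProb x) ∧
       (F x = some false → M.acceptProb x ≤ 1 / 2 - ε)

/-- The QOBDD obtained by reordering: order `π`, matrices `G' i = G (ord⁻¹ (π i))`. -/
def reorder {n w : ℕ} (M : QOBDD n w) (π : Equiv.Perm (Fin n)) : QOBDD n w :=
  ⟨π, fun i => M.G (M.ord.symm (π i)), M.start, M.acc⟩

end QOBDD
lemma zIdx {q l : ℕ} (i : Fin q) (j : Fin l) : (i : ℕ) * l + (j : ℕ) < q * (l + 1) :=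
  calc (i : ℕ) * l + (j : ℕ) < (i : ℕ) * l + l := Nat.add_lt_add_left j.isLt _
    _ = ((i : ℕ) + 1) * l := by ring
    _ ≤ q * l := Nat.mul_le_mul i.isLt (Nat.le_refl l)
    _ ≤ q * (l + 1) := Nat.mul_le_mul (Nat.le_refl q) (Nat.le_succ l)

lemma yIdx {q l : ℕ} (i : Fin q) : q * l + (i : ℕ) < q * (l + 1) :=
  calc q * l + (i : ℕ) < q * l + q := Nat.add_lt_add_left i.isLt _
    _ = q * (l + 1) := by ring

/-- The bit `z_{i,j}` of an input to the reordered function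
(layout: `z_{1,1},…,z_{q,l}, y_1,…,y_q`). -/
def zOf (q l : ℕ) (x : Fin (q * (l + 1)) → Bool) (i : Fin q) (j : Fin l) : Bool :=
  x ⟨(i : ℕ) * l + (j : ℕ), zIdx i j⟩

/-- The value bit `y_i` of an input to the reordered function. -/
def yOf (q l : ℕ) (x : Fin (q * (l + 1)) → Bool) (i : Fin q) : Bool :=
  x ⟨q * l + (i : ℕ), yIdx i⟩

/-- `z_{1,j} ⊕ ⋯ ⊕ z_{i,j}`. -/
def xorZ (q l : ℕ) (x : Fin (q * (l + 1)) → Bool) (i : Fin q) (j : Fin l) : Bool :=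
  decide ((Finset.univ.filter (fun i' : Fin q => i' ≤ i ∧ zOf q l x i' j = true)).card % 2 = 1)

/-- `θ(i) − 1` for the plain reordering. -/
def addrOrd (q l : ℕ) (x : Fin (q * (l + 1)) → Bool) (i : Fin q) : ℕ :=
  binVal l (zOf q l x i)

/-- `θ(i) − 1` for the xor-reordering. -/
def addrXor (q l : ℕ) (x : Fin (q * (l + 1)) → Bool) (i : Fin q) : ℕ :=
  binVal l (xorZ q l x i)

/-- The partial reordered function: defined exactly when the addresses form a
permutation of `{1,…,q}`; then position `j` of `f`'s argument is `y_{θ⁻¹(j)}`. -/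
noncomputable def ordPartial (q l : ℕ) (f : (Fin q → Bool) → Bool)
    (addr : (Fin (q * (l + 1)) → Bool) → Fin q → ℕ) :
    (Fin (q * (l + 1)) → Bool) → Option Bool := fun x =>
  if h : ∃ σ : Equiv.Perm (Fin q), ∀ i, addr x i = (σ i : ℕ) then
    some (f fun j => yOf q l x (h.choose.symm j))
  else none

/-- The partial function `ord(f)`. -/
noncomputable def ordF (q : ℕ) (f : (Fin q → Bool) → Bool) :
    (Fin (q * (Nat.clog 2 q + 1)) → Bool) → Option Bool :=
  ordPartial q (Nat.clog 2 q) f (addrOrd q (Nat.clog 2 q))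

/-- The partial function `⊕ord(f)`. -/
noncomputable def xorOrdF (q : ℕ) (f : (Fin q → Bool) → Bool) :
    (Fin (q * (Nat.clog 2 q + 1)) → Bool) → Option Bool :=
  ordPartial q (Nat.clog 2 q) f (addrXor q (Nat.clog 2 q))
/-- `Adr(i)` for an input of `REQ_q`. -/
def reqAdr (q : ℕ) (x : Fin (2 * q * (Nat.clog 2 (2 * q) + 1)) → Bool) (i : Fin (2 * q)) : ℕ :=
  addrXor (2 * q) (Nat.clog 2 (2 * q)) x i

def reqU (q : ℕ) (x : Fin (2 * q * (Nat.clog 2 (2 * q) + 1)) → Bool) : ℕ :=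
  (∑ i : Fin (2 * q),
      if reqAdr q x i < q then
        2 ^ reqAdr q x i * (if yOf (2 * q) (Nat.clog 2 (2 * q)) x i then 1 else 0)
      else 0) % 2 ^ q

def reqV (q : ℕ) (x : Fin (2 * q * (Nat.clog 2 (2 * q) + 1)) → Bool) : ℕ :=
  (∑ i : Fin (2 * q),
      if q ≤ reqAdr q x i then
        2 ^ (reqAdr q x i - q) * (if yOf (2 * q) (Nat.clog 2 (2 * q)) x i then 1 else 0)
      else 0) % 2 ^ q

/-- The (total) xor-reordered equality function `REQ_q`. -/
def REQ (q : ℕ) (x : Fin (2 * q * (Nat.clog 2 (2 * q) + 1)) → Bool) : Bool :=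
  decide (reqU q x = reqV q x)

/-!
Reading the input in the order `z₁, y₁, z₂, y₂, …` (with `zᵢ` the block of address bits), a reversible
classical program keeps the prefix XOR of the address blocks in a register and learns the address of
`yᵢ` exactly when it reads `yᵢ`; adding `± 2 ^ Adr` to an accumulator in `ℤ/2^q` produces `u - v`.
The accumulator is too large to store, so only a quantum fingerprint of it is kept: `S` is replaced
by the state `m^{-1/2} ∑ⱼ χⱼ(S) |j⟩` for `m` fixed characters `χⱼ`, on which adding a weight is a
diagonal unitary. Measuring whether the phases have returned to those of `S = 0` accepts with
probability `|m⁻¹ ∑ⱼ χⱼ(S)|²`, which is `1` when `S = 0`. For each `S ≠ 0` a uniformly random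
character has mean zero at `S`, so by a Chernoff bound and a union bound over `ℤ/2^q`, `m = O(q)`
characters can be fixed which make this probability small for all `S ≠ 0` simultaneously. The
register has `2 ^ ⌈log₂ 2q⌉ ≤ 4q` values, whence the width `O(q²)`.
-/

open Real

section Chernoff

variable {K I : Type*} [Fintype K] [Fintype I]

lemma sum_exp_mul_le_of_sum_eq_zero {f : K → ℝ} (hf : ∀ k, |f k| ≤ 1) (hsum : ∑ k, f k = 0)
    {δ : ℝ} (hδ : |δ| ≤ 1) : ∑ k, exp (δ * f k) ≤ Fintype.card K * exp (δ ^ 2) := by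
  have hexp : ∀ k, exp (δ * f k) ≤ δ * f k + exp (δ ^ 2) := fun k => by
    have hle : |δ * f k| ≤ 1 := by
      rw [abs_mul]
      exact mul_le_one₀ hδ (abs_nonneg _) (hf k)
    have hquad := (abs_le.mp (abs_exp_sub_one_sub_id_le hle)).2
    have hsq : (δ * f k) ^ 2 ≤ δ ^ 2 := by
      rw [mul_pow]
      exact mul_le_of_le_one_right (sq_nonneg δ) ((sq_le_one_iff_abs_le_one _).mpr (hf k))
    linarith [add_one_le_exp (δ ^ 2)]
  calc ∑ k, exp (δ * f k) ≤ ∑ k, (δ * f k + exp (δ ^ 2)) := Finset.sum_le_sum fun k _ => hexp k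
    _ = Fintype.card K * exp (δ ^ 2) := by
      simp [Finset.sum_add_distrib, ← Finset.mul_sum, hsum]

lemma exists_sum_exp_mul_sum_le [Nonempty K] {g : K → I → ℝ} (hg : ∀ k i, |g k i| ≤ 1)
    (hsum : ∀ i, ∑ k, g k i = 0) {δ : ℝ} (hδ : |δ| ≤ 1) (m : ℕ) :
    ∃ k : Fin m → K, ∑ i, exp (δ * ∑ j, g (k j) i) ≤ Fintype.card I * exp (δ ^ 2) ^ m := by
  have havg : ∑ k : Fin m → K, ∑ i, exp (δ * ∑ j, g (k j) i) ≤
      ∑ _k : Fin m → K, Fintype.card I * exp (δ ^ 2) ^ m := by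
    calc ∑ k : Fin m → K, ∑ i, exp (δ * ∑ j, g (k j) i)
        = ∑ i, (∑ a, exp (δ * g a i)) ^ m := by
          rw [Finset.sum_comm]
          simp only [Finset.mul_sum, exp_sum, Fintype.sum_pow]
      _ ≤ ∑ _i : I, (Fintype.card K * exp (δ ^ 2)) ^ m := by
          gcongr with i
          exact sum_exp_mul_le_of_sum_eq_zero (hg · i) (hsum i) hδ
      _ = ∑ _k : Fin m → K, Fintype.card I * exp (δ ^ 2) ^ m := by
          simp [mul_pow, mul_left_comm]
  obtain ⟨k, -, hk⟩ := Finset.exists_le_of_sum_le Finset.univ_nonempty havg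
  exact ⟨k, hk⟩

lemma exists_forall_sum_le [Nonempty K] {g : K → I → ℝ} (hg : ∀ k i, |g k i| ≤ 1)
    (hsum : ∀ i, ∑ k, g k i = 0) {δ : ℝ} (hδ₀ : 0 < δ) (hδ₁ : δ ≤ 1) {m : ℕ}
    (hm : Fintype.card I ≤ exp (δ ^ 2 * m)) :
    ∃ k : Fin m → K, ∀ i, ∑ j, g (k j) i ≤ 2 * δ * m := by
  obtain ⟨k, hk⟩ := exists_sum_exp_mul_sum_le hg hsum (abs_le.mpr ⟨by linarith, hδ₁⟩) m
  refine ⟨k, fun i => ?_⟩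
  have hexp : exp (δ * ∑ j, g (k j) i) ≤ exp (δ ^ 2 * m + δ ^ 2 * m) := by
    calc exp (δ * ∑ j, g (k j) i) ≤ ∑ i, exp (δ * ∑ j, g (k j) i) :=
          Finset.single_le_sum (f := fun i => exp (δ * ∑ j, g (k j) i))
            (fun _ _ => (exp_pos _).le) (Finset.mem_univ i)
      _ ≤ Fintype.card I * exp (δ ^ 2) ^ m := hk
      _ ≤ exp (δ ^ 2 * m) * exp (δ ^ 2) ^ m := by
          gcongr
      _ = exp (δ ^ 2 * m + δ ^ 2 * m) := by rw [← exp_nat_mul, ← exp_add, mul_comm (m : ℝ)]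
  rw [exp_le_exp] at hexp
  nlinarith

lemma norm_sq_le_two_mul_sq_of_re_I_pow_mul_le {w : ℂ} {B : ℝ}
    (h : ∀ r : Fin 4, (Complex.I ^ (r : ℕ) * w).re ≤ B) : ‖w‖ ^ 2 ≤ 2 * B ^ 2 := by
  have hre : |w.re| ≤ B := abs_le'.mpr ⟨by simpa using h 0, by simpa using h 2⟩
  have him : |w.im| ≤ B :=
    abs_le'.mpr ⟨by simpa [Complex.I_pow_three] using h 3, by simpa using h 1⟩
  rw [← Complex.normSq_eq_norm_sq, Complex.normSq_apply]
  nlinarith [sq_le_sq' (abs_le.mp hre).1 (abs_le.mp hre).2,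
    sq_le_sq' (abs_le.mp him).1 (abs_le.mp him).2]

lemma exists_forall_norm_sum_sq_le [Nonempty K] {z : K → I → ℂ} (hz : ∀ k i, ‖z k i‖ ≤ 1)
    (hsum : ∀ i, ∑ k, z k i = 0) {δ : ℝ} (hδ₀ : 0 < δ) (hδ₁ : δ ≤ 1) {m : ℕ}
    (hm : 4 * Fintype.card I ≤ exp (δ ^ 2 * m)) :
    ∃ k : Fin m → K, ∀ i, ‖∑ j, z (k j) i‖ ^ 2 ≤ 8 * δ ^ 2 * m ^ 2 := by
  let g : K → I × Fin 4 → ℝ := fun k i => (Complex.I ^ (i.2 : ℕ) * z k i.1).re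
  have hg : ∀ k i, |g k i| ≤ 1 := fun k i =>
    (Complex.abs_re_le_norm _).trans (by simpa using hz k i.1)
  have hgsum : ∀ i, ∑ k, g k i = 0 := fun i => by
    simp only [g, ← Complex.re_sum, ← Finset.mul_sum, hsum, mul_zero, Complex.zero_re]
  obtain ⟨k, hk⟩ := exists_forall_sum_le hg hgsum hδ₀ hδ₁ (m := m) (by simpa [mul_comm] using hm)
  refine ⟨k, fun i => ?_⟩
  have hdir : ∀ r : Fin 4, (Complex.I ^ (r : ℕ) * ∑ j, z (k j) i).re ≤ 2 * δ * m := fun r => by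
    simpa only [Finset.mul_sum, Complex.re_sum] using hk (i, r)
  linarith [norm_sq_le_two_mul_sq_of_re_I_pow_mul_le hdir]

end Chernoff

lemma exists_addChar_norm_sum_sq_le (G : Type*) [AddCommGroup G] [Fintype G] {δ : ℝ}
    (hδ₀ : 0 < δ) (hδ₁ : δ ≤ 1) {m : ℕ} (hm : 4 * Fintype.card G ≤ exp (δ ^ 2 * m)) :
    ∃ χ : Fin m → AddChar G Circle, ∀ s ≠ 0,
      ‖∑ j, (χ j s : ℂ)‖ ^ 2 ≤ 8 * δ ^ 2 * m ^ 2 := by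
  classical
  let z : AddChar G ℂ → {s : G // s ≠ 0} → ℂ := fun ψ s => ψ s
  have hsum : ∀ s, ∑ ψ, z ψ s = 0 := fun s => by
    rw [AddChar.sum_apply_eq_ite, if_neg s.2]
  have hcard : (4 * Fintype.card {s : G // s ≠ 0} : ℝ) ≤ 4 * Fintype.card G := by
    gcongr
    exact Fintype.card_subtype_le _
  obtain ⟨ψ, hψ⟩ := exists_forall_norm_sum_sq_le (fun ψ s => (ψ.norm_apply s.1).le) hsum hδ₀ hδ₁
    (hcard.trans hm)
  exact ⟨fun j => AddChar.circleEquivComplex.symm (ψ j), fun s hs => hψ ⟨s, hs⟩⟩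

lemma exists_orthonormalBasis_comp_eq {𝕜 E κ : Type*} [RCLike 𝕜] [NormedAddCommGroup E]
    [InnerProductSpace 𝕜 E] [FiniteDimensional 𝕜 E] {v : κ → E} (hv : Orthonormal 𝕜 v) :
    ∃ (b : OrthonormalBasis (Fin (Module.finrank 𝕜 E)) 𝕜 E)
      (e : κ ↪ Fin (Module.finrank 𝕜 E)), ∀ a, b (e a) = v a := by
  obtain ⟨u, b, hvu, hb⟩ := hv.toSubtypeRange.exists_orthonormalBasis_extension
  have hcard : Fintype.card u = Module.finrank 𝕜 E :=
    (Module.finrank_eq_card_basis b.toBasis).symm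
  let σ := Fintype.equivFinOfCardEq hcard
  have hmem : ∀ a, v a ∈ u := fun a => hvu (Set.mem_range_self a)
  have hinj : Function.Injective fun a => σ ⟨v a, hmem a⟩ := fun a a' h =>
    hv.linearIndependent.injective (congrArg Subtype.val (σ.injective h))
  refine ⟨b.reindex σ, ⟨_, hinj⟩, fun a => ?_⟩
  rw [OrthonormalBasis.reindex_apply, Function.Embedding.coeFn_mk, Equiv.symm_apply_apply, hb]

namespace QOBDD

variable {n : ℕ} {E : Type*} [NormedAddCommGroup E] [InnerProductSpace ℂ E]

/-- The QOBDD that reads the input in the order `ord` and applies the isometries `U` of an abstract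
state space, written as matrices in the orthonormal basis `b`. -/
noncomputable def ofIsometry {w : ℕ} (b : OrthonormalBasis (Fin w) ℂ E)
    (ord : Equiv.Perm (Fin n)) (U : Fin n → Bool → E ≃ₗᵢ[ℂ] E) (start : Fin w)
    (acc : Finset (Fin w)) : QOBDD n w where
  ord := ord
  G i c := ⟨(U i c).toLinearMap.toMatrix b.toBasis b.toBasis, (U i c).toMatrix_mem_unitaryGroup b b⟩
  start := start
  acc := acc

lemma finalVec_ofIsometry {w : ℕ} (b : OrthonormalBasis (Fin w) ℂ E)
    (ord : Equiv.Perm (Fin n)) (U : Fin n → Bool → E ≃ₗᵢ[ℂ] E) (start : Fin w)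
    (acc : Finset (Fin w)) (x : Fin n → Bool) :
    (ofIsometry b ord U start acc).finalVec x =
      b.repr ((List.finRange n).foldl (fun ψ i => U i (x (ord i)) ψ) (b start)) := by
  have hstart : Pi.single (ofIsometry b ord U start acc).start (1 : ℂ) = b.repr (b start) := by
    simp [ofIsometry]
  rw [finalVec, hstart]
  exact List.foldl_hom (fun ψ => (b.repr ψ : Fin w → ℂ)) fun ψ i =>
    LinearMap.toMatrix_mulVec_repr b.toBasis b.toBasis (U i (x (ord i))).toLinearMap ψ

lemma exists_acceptProb_eq_of_orthonormal [FiniteDimensional ℂ E] {κ : Type*} [Fintype κ]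
    {v : κ → E} (hv : Orthonormal ℂ v) (ord : Equiv.Perm (Fin n))
    (U : Fin n → Bool → E ≃ₗᵢ[ℂ] E) (s : κ) :
    ∃ M : QOBDD n (Module.finrank ℂ E), ∀ x, M.acceptProb x =
      ∑ a, ‖inner ℂ (v a) ((List.finRange n).foldl (fun ψ i => U i (x (ord i)) ψ) (v s))‖ ^ 2 := by
  obtain ⟨b, e, hbe⟩ := exists_orthonormalBasis_comp_eq hv
  refine ⟨ofIsometry b ord U (e s) (Finset.univ.map e), fun x => ?_⟩
  rw [acceptProb, finalVec_ofIsometry]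
  simp only [ofIsometry, Finset.sum_map, Complex.normSq_eq_norm_sq, b.repr_apply_apply, hbe]

end QOBDD

section Fingerprint

variable {H ι G : Type*} [Fintype ι] [AddCommGroup G]

open scoped Classical in
/-- The fingerprint `|a⟩ ⊗ |ι|^{-1/2} ∑ⱼ χⱼ(g) |j⟩` of a classical register `a` and a group
element `g` with respect to the characters `χ`. -/
noncomputable def fingerprint (χ : ι → AddChar G Circle) (s : H × G) :
    EuclideanSpace ℂ (H × ι) :=
  WithLp.toLp 2 fun y => if y.1 = s.1 then (√(Fintype.card ι) : ℂ)⁻¹ * χ y.2 s.2 else 0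

variable [Fintype H]

lemma inner_fingerprint (χ : ι → AddChar G Circle) (s t : H × G) [Decidable (s.1 = t.1)] :
    inner ℂ (fingerprint χ s) (fingerprint χ t) =
      if s.1 = t.1 then (Fintype.card ι : ℂ)⁻¹ * ∑ j, (χ j (t.2 - s.2) : ℂ) else 0 := by
  have hsqrt : (√(Fintype.card ι) : ℂ)⁻¹ * (√(Fintype.card ι) : ℂ)⁻¹ = (Fintype.card ι : ℂ)⁻¹ := by
    rw [← mul_inv, ← Complex.ofReal_mul, mul_self_sqrt (Nat.cast_nonneg _),
      Complex.ofReal_natCast]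
  have hphase : ∀ j, (χ j t.2 : ℂ) * (starRingEnd ℂ) (χ j s.2 : ℂ) = χ j (t.2 - s.2) := fun j => by
    rw [sub_eq_add_neg, AddChar.map_add_eq_mul, AddChar.map_neg_eq_inv, Circle.coe_mul,
      Circle.coe_inv_eq_conj]
  rw [PiLp.inner_apply, Fintype.sum_prod_type, Finset.sum_eq_single s.1]
  · by_cases h : s.1 = t.1
    · simp only [fingerprint, h, if_true, RCLike.inner_apply, Finset.mul_sum, map_mul, map_inv₀,
        Complex.conj_ofReal, mul_mul_mul_comm, hsqrt, hphase]
    · simp [fingerprint, h]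
  · intro c _ hc
    simp [fingerprint, hc]
  · simp

lemma orthonormal_fingerprint [Nonempty ι] (χ : ι → AddChar G Circle) :
    Orthonormal ℂ fun a : H => fingerprint χ (a, 0) := by
  classical
  rw [orthonormal_iff_ite]
  intro a a'
  simp [inner_fingerprint]

/-- The gate that multiplies the phases by the characters of `g a`, where `a` is the current
register, and then moves the register by `σ`. -/
noncomputable def fingerprintGate (χ : ι → AddChar G Circle) (σ : Equiv.Perm H) (g : H → G) :
    EuclideanSpace ℂ (H × ι) ≃ₗᵢ[ℂ] EuclideanSpace ℂ (H × ι) :=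
  (LinearIsometryEquiv.piLpCongrRight 2 fun y : H × ι =>
    { DistribMulAction.toLinearEquiv ℂ ℂ (χ y.2 (g y.1)) with
      norm_map' := Circle.norm_smul _ }).trans
  (LinearIsometryEquiv.piLpCongrLeft 2 ℂ ℂ (σ.prodCongr (Equiv.refl ι)))

lemma fingerprintGate_fingerprint (χ : ι → AddChar G Circle) (σ : Equiv.Perm H) (g : H → G)
    (s : H × G) :
    fingerprintGate χ σ g (fingerprint χ s) = fingerprint χ (σ s.1, s.2 + g s.1) := by
  ext ⟨a, j⟩
  by_cases h : σ.symm a = s.1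
  · have ha : a = σ s.1 := σ.symm_apply_eq.mp h
    simp [fingerprintGate, fingerprint, LinearIsometryEquiv.piLpCongrLeft_apply, ha,
      AddChar.map_add_eq_mul, Circle.smul_def, mul_left_comm, mul_comm (χ j s.2 : ℂ)]
  · have ha : a ≠ σ s.1 := fun ha => h (σ.symm_apply_eq.mpr ha)
    simp [fingerprintGate, fingerprint, LinearIsometryEquiv.piLpCongrLeft_apply, h, ha]

end Fingerprint

/-- A reversible classical branching program that moves a register in `H` and, depending on the
register, adds weights to an accumulator in `G`. -/
structure AccumulatorProgram (n : ℕ) (H G : Type*) where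
  ord : Equiv.Perm (Fin n)
  start : H
  move : Fin n → Bool → Equiv.Perm H
  weight : Fin n → Bool → H → G

namespace AccumulatorProgram

variable {n : ℕ} {H G : Type*}

/-- One transition of `P`; the weight is that of the register before it moves. -/
def step [Add G] (P : AccumulatorProgram n H G) (x : Fin n → Bool) (s : H × G) (i : Fin n) :
    H × G :=
  (P.move i (x (P.ord i)) s.1, s.2 + P.weight i (x (P.ord i)) s.1)

/-- The final register and accumulator of `P` on input `x`. -/
def run [AddMonoid G] (P : AccumulatorProgram n H G) (x : Fin n → Bool) : H × G :=
  (List.finRange n).foldl (P.step x) (P.start, 0)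

variable [Fintype H] [AddCommGroup G]

lemma foldl_fingerprintGate {ι : Type*} [Fintype ι] (P : AccumulatorProgram n H G)
    (χ : ι → AddChar G Circle) (x : Fin n → Bool) :
    (List.finRange n).foldl
        (fun ψ i => fingerprintGate χ (P.move i (x (P.ord i))) (P.weight i (x (P.ord i))) ψ)
        (fingerprint χ (P.start, 0)) = fingerprint χ (P.run x) :=
  List.foldl_hom (fingerprint χ) fun _ _ => fingerprintGate_fingerprint χ _ _ _

lemma exists_qobdd_acceptProb_eq {m : ℕ} [NeZero m] (P : AccumulatorProgram n H G)
    (χ : Fin m → AddChar G Circle) :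
    ∃ M : QOBDD n (Fintype.card H * m), ∀ x,
      M.acceptProb x = ‖∑ j, (χ j (P.run x).2 : ℂ)‖ ^ 2 / m ^ 2 := by
  classical
  have hw : Fintype.card H * m = Module.finrank ℂ (EuclideanSpace ℂ (H × Fin m)) := by simp
  rw [hw]
  obtain ⟨M, hM⟩ := QOBDD.exists_acceptProb_eq_of_orthonormal (orthonormal_fingerprint χ) P.ord
    (fun i c => fingerprintGate χ (P.move i c) (P.weight i c)) P.start
  refine ⟨M, fun x => ?_⟩
  simp [hM, foldl_fingerprintGate, inner_fingerprint, apply_ite, div_eq_inv_mul, mul_pow]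

lemma exists_qobdd_acceptProb_le [Fintype G] (P : AccumulatorProgram n H G) {δ : ℝ} (hδ₀ : 0 < δ)
    (hδ₁ : δ ≤ 1) {m : ℕ} (hm : 4 * Fintype.card G ≤ exp (δ ^ 2 * m)) :
    ∃ M : QOBDD n (Fintype.card H * m), ∀ x,
      ((P.run x).2 = 0 → M.acceptProb x = 1) ∧
        ((P.run x).2 ≠ 0 → M.acceptProb x ≤ 8 * δ ^ 2) := by
  have hm₀ : m ≠ 0 := by
    rintro rfl
    have hG : (1 : ℝ) ≤ Fintype.card G := mod_cast Fintype.card_pos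
    simp only [Nat.cast_zero, mul_zero, exp_zero] at hm
    linarith
  have : NeZero m := ⟨hm₀⟩
  obtain ⟨χ, hχ⟩ := exists_addChar_norm_sum_sq_le G hδ₀ hδ₁ hm
  obtain ⟨M, hM⟩ := P.exists_qobdd_acceptProb_eq χ
  refine ⟨M, fun x => ⟨fun h => ?_, fun h => ?_⟩⟩
  · simp [hM, h, hm₀]
  · rw [hM, div_le_iff₀ (by positivity)]
    exact hχ _ h

end AccumulatorProgram

lemma foldl_finRange_mul {α : Type*} {m n : ℕ} (f : α → Fin (m * n) → α) (a : α) :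
    (List.finRange (m * n)).foldl f a = (List.finRange m).foldl
      (fun a i => (List.finRange n).foldl (fun a j => f a (finProdFinEquiv (i, j))) a) a := by
  have hflat : List.finRange (m * n) = ((List.finRange m).map fun i =>
      (List.finRange n).map fun j => finProdFinEquiv (i, j)).flatten := by
    rw [← List.ofFn_id, List.ofFn_mul]
    simp only [← List.ofFn_eq_map]
    congr! 6
    simp [Fin.ext_iff, mul_comm, add_comm]
  simp only [hflat, List.foldl_flatten, List.foldl_map]

lemma foldl_finRange_add {A : Type*} [AddCommMonoid A] {n : ℕ} (f : Fin n → A) (a : A) :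
    (List.finRange n).foldl (fun a i => a + f i) a = a + ∑ i, f i := by
  induction n with
  | zero => simp
  | succ n ih =>
    simp [List.finRange_succ_last, List.foldl_map, ih, Fin.sum_univ_castSucc, add_assoc]

lemma foldl_finRange_add_prefixSum {A B : Type*} [AddCommMonoid A] [AddCommMonoid B] {n : ℕ}
    (z : Fin n → A) (g : Fin n → A → B) :
    (List.finRange n).foldl (fun s i => (s.1 + z i, s.2 + g i (s.1 + z i))) (0, 0) =
      (∑ i, z i, ∑ i, g i (∑ i' ∈ Finset.Iic i, z i')) := by
  induction n with
  | zero => simp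
  | succ n ih =>
    simp [List.finRange_succ_last, List.foldl_map, ih, Fin.sum_univ_castSucc,
      Fin.sum_Iic_castSucc, ← Fin.top_eq_last]

/-- The reading order `z_{1,1}, …, z_{1,l}, y₁, z_{2,1}, …, z_{2,l}, y₂, …`. -/
def blockOrder (Q l : ℕ) : Equiv.Perm (Fin (Q * (l + 1))) :=
  finProdFinEquiv.symm.trans <| ((Equiv.refl _).prodCongr finSumFinEquiv.symm).trans <|
    (Equiv.prodSumDistrib _ _ _).trans <|
      (finProdFinEquiv.sumCongr (Equiv.prodUnique _ _)).trans <|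
        finSumFinEquiv.trans (finCongr (Nat.mul_succ Q l).symm)

section Block

variable {Q l : ℕ} (x : Fin (Q * (l + 1)) → Bool) (i : Fin Q)

lemma apply_blockOrder_castSucc (j : Fin l) :
    x (blockOrder Q l (finProdFinEquiv (i, j.castSucc))) = zOf Q l x i j := by
  have hj : finSumFinEquiv.symm j.castSucc = (Sum.inl j : Fin l ⊕ Fin 1) :=
    finSumFinEquiv_symm_apply_castAdd j
  refine congrArg x (Fin.ext ?_)
  simp [-finCongr_refl, blockOrder, hj, mul_comm, add_comm]

lemma apply_blockOrder_last :
    x (blockOrder Q l (finProdFinEquiv (i, Fin.last l))) = yOf Q l x i := by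
  have hl : finSumFinEquiv.symm (Fin.last l) = (Sum.inr 0 : Fin l ⊕ Fin 1) :=
    finSumFinEquiv_symm_apply_natAdd 0
  refine congrArg x (Fin.ext ?_)
  simp [-finCongr_refl, blockOrder, hl]

/-- The vector `(z_{i,1}, …, z_{i,l})` over `𝔽₂`, so that prefix sums compute the XORs. -/
def zVec : Fin l → ZMod 2 := fun j => if zOf Q l x i j then 1 else 0

lemma xorZ_eq_decide_sum_zVec :
    xorZ Q l x i = fun j => decide ((∑ i' ∈ Finset.Iic i, zVec x i') j = 1) := by
  ext j
  simp only [xorZ, Finset.sum_apply, zVec, Finset.sum_boole, ZMod.natCast_eq_one_iff_odd,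
    Nat.odd_iff, ← Finset.filter_ge_eq_Iic, Finset.filter_filter]

end Block

/-- The program in block order whose register is the address prefix sum and which, for every
`y_i = 1`, adds the weight `w` of the current address to its accumulator. -/
def blockProgram (Q : ℕ) {l : ℕ} {G : Type*} [Zero G] (w : (Fin l → ZMod 2) → G) :
    AccumulatorProgram (Q * (l + 1)) (Fin l → ZMod 2) G where
  ord := blockOrder Q l
  start := 0
  move k c := Fin.lastCases (Equiv.refl _)
    (fun j => Equiv.addRight (Pi.single j (if c then 1 else 0))) (finProdFinEquiv.symm k).2
  weight k c := Fin.lastCases (fun a => if c then w a else 0) (fun _ _ => 0)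
    (finProdFinEquiv.symm k).2

section BlockProgram

variable {Q l : ℕ} {G : Type*} [AddCommMonoid G] (w : (Fin l → ZMod 2) → G)
  (x : Fin (Q * (l + 1)) → Bool)

lemma foldl_step_blockProgram (s : (Fin l → ZMod 2) × G) (i : Fin Q) :
    (List.finRange (l + 1)).foldl
        (fun s j => (blockProgram Q w).step x s (finProdFinEquiv (i, j))) s =
      (s.1 + zVec x i, s.2 + if yOf Q l x i then w (s.1 + zVec x i) else 0) := by
  have hz : ∀ (s : (Fin l → ZMod 2) × G) (j : Fin l),
      (blockProgram Q w).step x s (finProdFinEquiv (i, j.castSucc)) =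
        s + (Pi.single j (zVec x i j), 0) := fun s j => by
    ext <;> simp [-finProdFinEquiv_symm_apply, AccumulatorProgram.step, blockProgram,
      apply_blockOrder_castSucc, zVec]
  have hy : ∀ s : (Fin l → ZMod 2) × G,
      (blockProgram Q w).step x s (finProdFinEquiv (i, Fin.last l)) =
        (s.1, s.2 + if yOf Q l x i then w s.1 else 0) := fun s => by
    ext <;> simp [-finProdFinEquiv_symm_apply, AccumulatorProgram.step, blockProgram,
      apply_blockOrder_last]
  have hsum : ∑ j, (Pi.single j (zVec x i j), (0 : G)) = (zVec x i, 0) := by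
    ext1 <;> simp [Prod.fst_sum, Prod.snd_sum, Finset.univ_sum_single]
  simp [List.finRange_succ_last, List.foldl_map, hz, hy, foldl_finRange_add, hsum]

lemma run_blockProgram_snd :
    ((blockProgram Q w).run x).2 =
      ∑ i, if yOf Q l x i then w (∑ i' ∈ Finset.Iic i, zVec x i') else 0 := by
  have hfold := foldl_finRange_add_prefixSum (zVec x) fun i a => if yOf Q l x i then w a else 0
  rw [AccumulatorProgram.run, foldl_finRange_mul]
  simp only [foldl_step_blockProgram]
  exact congrArg Prod.snd hfold

end BlockProgram

lemma pow_clog_le_mul {b n : ℕ} (hb : 1 < b) (hn : n ≠ 0) : b ^ Nat.clog b n ≤ b * n := by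
  obtain rfl | hn₁ := eq_or_ne n 1
  · simpa using hb.le
  have hclog : 0 < Nat.clog b n := Nat.clog_pos hb (by lia)
  calc b ^ Nat.clog b n = b * b ^ (Nat.clog b n).pred := by
        rw [← pow_succ', Nat.pred_eq_sub_one, Nat.sub_add_cancel hclog]
    _ ≤ b * n := Nat.mul_le_mul_left b (Nat.pow_pred_clog_lt_self hb (by lia)).le

lemma four_mul_two_pow_le_exp {q : ℕ} (hq : 1 ≤ q) : 4 * 2 ^ q ≤ exp (3 * q) := by
  calc (4 * 2 ^ q : ℝ) ≤ 4 ^ q * 2 ^ q := by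
        gcongr
        exact le_self_pow₀ (by norm_num) (by lia)
    _ = (2 ^ 3) ^ q := by rw [← mul_pow]; norm_num
    _ ≤ (exp 1 ^ 3) ^ q := by
        gcongr
        linarith [add_one_le_exp 1]
    _ = exp (3 * q) := by
        rw [← pow_mul, ← exp_nat_mul]
        push_cast
        ring_nf

/-- The weight in `ℤ/2^q` for which the selected `y_i` contribute `u - v` in total. -/
def reqWeight (q A : ℕ) : ZMod (2 ^ q) := if A < q then 2 ^ A else -2 ^ (A - q)

lemma REQ_eq_true_iff (q : ℕ) (x : Fin (2 * q * (Nat.clog 2 (2 * q) + 1)) → Bool) :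
    REQ q x = true ↔
      ∑ i, (if yOf (2 * q) (Nat.clog 2 (2 * q)) x i then
        reqWeight q (reqAdr q x i) else 0) = 0 := by
  have hcast : reqU q x = reqV q x ↔ (reqU q x : ZMod (2 ^ q)) = reqV q x := by
    rw [ZMod.natCast_eq_natCast_iff']
    simp [reqU, reqV]
  rw [REQ, decide_eq_true_iff, hcast, ← sub_eq_zero, reqU, reqV, ZMod.natCast_mod,
    ZMod.natCast_mod, Nat.cast_sum, Nat.cast_sum, ← Finset.sum_sub_distrib]
  refine Eq.congr_left (Finset.sum_congr rfl fun i _ => ?_)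
  unfold reqWeight
  by_cases hy : yOf (2 * q) (Nat.clog 2 (2 * q)) x i <;> by_cases hA : reqAdr q x i < q <;>
    simp [hy, hA, not_le.mpr, not_lt.mp]

/-- The program whose accumulator ends at `u - v`. -/
def reqProgram (q : ℕ) : AccumulatorProgram (2 * q * (Nat.clog 2 (2 * q) + 1))
    (Fin (Nat.clog 2 (2 * q)) → ZMod 2) (ZMod (2 ^ q)) :=
  blockProgram (2 * q) fun a => reqWeight q (binVal _ fun j => decide (a j = 1))

lemma run_reqProgram_snd_eq_zero_iff (q : ℕ)
    (x : Fin (2 * q * (Nat.clog 2 (2 * q) + 1)) → Bool) :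
    ((reqProgram q).run x).2 = 0 ↔ REQ q x = true := by
  simp only [REQ_eq_true_iff, reqProgram, run_blockProgram_snd, reqAdr, addrXor,
    xorZ_eq_decide_sum_zVec]

/-- `REQ_q` has a one-sided bounded-error QOBDD of width `O(q²)`. -/
theorem stmt10 :
    ∃ c : ℕ, 0 < c ∧
      ∀ q : ℕ, 1 ≤ q →
        ∃ W : ℕ, W ≤ c * q ^ 2 ∧
          ∃ M : QOBDD (2 * q * (Nat.clog 2 (2 * q) + 1)) W,
            ∀ x, (REQ q x = true → M.acceptProb x = 1) ∧
                 (REQ q x = false → M.acceptProb x ≤ 1 / 3) := by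
  refine ⟨300, by norm_num, fun q hq => ?_⟩
  -- `δ = 1 / 5` and `m = 75 * q`, so that `8 * δ ^ 2 = 8 / 25` and `δ ^ 2 * m = 3 * q`.
  have hexp : 4 * Fintype.card (ZMod (2 ^ q)) ≤ exp ((1 / 5) ^ 2 * (75 * q : ℕ)) := by
    calc (4 * Fintype.card (ZMod (2 ^ q)) : ℝ) = 4 * 2 ^ q := by simp [ZMod.card]
      _ ≤ exp (3 * q) := four_mul_two_pow_le_exp hq
      _ = exp ((1 / 5) ^ 2 * (75 * q : ℕ)) := by
          congr 1
          push_cast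
          ring
  obtain ⟨M, hM⟩ := (reqProgram q).exists_qobdd_acceptProb_le (by norm_num) (by norm_num) hexp
  refine ⟨_, ?_, M, fun x => ⟨fun h => ?_, fun h => ?_⟩⟩
  · calc Fintype.card (Fin (Nat.clog 2 (2 * q)) → ZMod 2) * (75 * q)
        = 2 ^ Nat.clog 2 (2 * q) * (75 * q) := by simp
      _ ≤ 2 * (2 * q) * (75 * q) := by
          gcongr
          exact pow_clog_le_mul one_lt_two (by lia)
      _ = 300 * q ^ 2 := by ring
  · exact (hM x).1 ((run_reqProgram_snd_eq_zero_iff q x).mpr h)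
  · have hne : ((reqProgram q).run x).2 ≠ 0 := by
      simp [run_reqProgram_snd_eq_zero_iff, h]
    linarith [(hM x).2 hne]
end

section
/- There is a constant c > 0 such that for every integer q ≥ 2, every deterministic OBDD (with an arbitrary variable order) representing the shifted equality function SEQ_q has width at least 2^{c·q}. -/
set_option maxHeartbeats 1000000
/-- A deterministic OBDD of width `w` over `n` Boolean variables. -/
structure OBDD (n w : ℕ) where
  ord : Equiv.Perm (Fin n)
  tr : Fin n → Fin w → Bool → Fin w
  start : Fin w
  acc : Finset (Fin w)

namespace OBDD

def final {n w : ℕ} (M : OBDD n w) (x : Fin n → Bool) : Fin w :=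
  (List.finRange n).foldl (fun s i => M.tr i s (x (M.ord i))) M.start

def Accepts {n w : ℕ} (M : OBDD n w) (x : Fin n → Bool) : Prop :=
  M.final x ∈ M.acc

def Represents {n w : ℕ} (M : OBDD n w) (f : (Fin n → Bool) → Bool) : Prop :=
  ∀ x, M.Accepts x ↔ f x = true

def RepresentsPartial {n w : ℕ} (M : OBDD n w) (F : (Fin n → Bool) → Option Bool) : Prop :=
  ∀ x b, F x = some b → (M.Accepts x ↔ b = true)

/-- The OBDD obtained by reordering: order `π`, transitions `tr' i = tr (ord⁻¹ (π i))`. -/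
def reorder {n w : ℕ} (M : OBDD n w) (π : Equiv.Perm (Fin n)) : OBDD n w :=
  ⟨π, fun i => M.tr (M.ord.symm (π i)), M.start, M.acc⟩

/-- Every reordering represents the same function as `M`. -/
def Commutative {n w : ℕ} (M : OBDD n w) : Prop :=
  ∀ (π : Equiv.Perm (Fin n)) (x : Fin n → Bool),
    (M.reorder π).Accepts x ↔ M.Accepts x

end OBDD
/-- The shift `bin(s_1,…,s_l)` encoded in the last `l = ⌈log₂ q⌉` bits. -/
def seqShift (q : ℕ) (x : Fin (2 * q + Nat.clog 2 q) → Bool) : ℕ :=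
  binVal (Nat.clog 2 q) (fun j => x ⟨2 * q + (j : ℕ), by have := j.isLt; omega⟩)

/-- The shifted equality function `SEQ_q`. -/
def SEQ (q : ℕ) (x : Fin (2 * q + Nat.clog 2 q) → Bool) : Bool :=
  decide (∀ i : Fin q,
    x ⟨(i : ℕ), by have := i.isLt; omega⟩ =
      x ⟨q + (((i : ℕ) + seqShift q x) % q), by
          have h := Nat.mod_lt ((i : ℕ) + seqShift q x) i.pos
          omega⟩)

/-!
Stop the OBDD at the moment when exactly `q` of the `2q` variables `x₁, …, x_q, y₁, …, y_q` have
been read. If `A` and `B` are the sets of indices `i` for which `xᵢ`, respectively `yᵢ`, has been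
read, then `|A| + |B| = q`, so the average of `|A ∩ (B - s)|` over all shifts `s` is
`|A||B| / q ≤ q / 4`. Hence for some `s` at least `q - 2 * (q / 4) = q / 2` of the pairs
`(xᵢ, yᵢ₊ₛ)` have one variable read and the other one not. With the shift bits fixed to `s`, inputs
that satisfy the equality but differ on these pairs must lead to different states, which makes at
least `2 ^ (q / 2)` states.
-/

open Finset
open scoped Pointwise symmDiff

theorem exists_card_filter_lt_eq {α : Type*} [LinearOrder α] {S : Finset α} {m : ℕ}
    (hm : m < #S) : ∃ a, #{t ∈ S | t < a} = m := by
  let e : Fin #S ↪o α := S.orderEmbOfFin rfl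
  refine ⟨e ⟨m, hm⟩, ?_⟩
  calc #{t ∈ S | t < e ⟨m, hm⟩} = #{t ∈ univ.map e.toEmbedding | t < e ⟨m, hm⟩} := by
        rw [map_orderEmbOfFin_univ S rfl]
    _ = #(Iio (⟨m, hm⟩ : Fin #S)) := by
        rw [filter_map, card_map]
        congr 1
        ext i
        simp
    _ = m := Fin.card_Iio _

theorem card_symmDiff_add_two_mul_card_inter {α : Type*} [DecidableEq α] (A B : Finset α) :
    #(A ∆ B) + 2 * #(A ∩ B) = #A + #B := by
  have hA := card_sdiff_add_card_inter A B
  have hB := card_sdiff_add_card_inter B A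
  rw [inter_comm] at hB
  rw [symmDiff_def, sup_eq_union, card_union_of_disjoint disjoint_sdiff_sdiff]
  omega

section AddGroup

variable {G : Type*} [AddGroup G] [Fintype G] [DecidableEq G]

theorem card_filter_mem_vadd (a : G) (B : Finset G) : #{g : G | a ∈ g +ᵥ B} = #B := by
  have heq : ({g | a ∈ g +ᵥ B} : Finset G) = a +ᵥ -B := by
    ext g
    simp [← neg_vadd_mem_iff]
  rw [heq, card_vadd_finset, card_neg]

theorem sum_card_inter_vadd (A B : Finset G) : ∑ g : G, #(A ∩ (g +ᵥ B)) = #A * #B := by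
  simp_rw [← filter_mem_eq_inter]
  calc ∑ g : G, #{a ∈ A | a ∈ g +ᵥ B} = ∑ a ∈ A, #{g : G | a ∈ g +ᵥ B} :=
        sum_card_bipartiteAbove_eq_sum_card_bipartiteBelow _
    _ = #A * #B := sum_const_nat fun a _ => card_filter_mem_vadd a B

theorem exists_card_inter_vadd_mul_card_le (A B : Finset G) :
    ∃ g : G, #(A ∩ (g +ᵥ B)) * Fintype.card G ≤ #A * #B := by
  have hsum : ∑ g : G, #(A ∩ (g +ᵥ B)) * Fintype.card G ≤ ∑ _g : G, #A * #B := by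
    rw [← sum_mul, sum_card_inter_vadd, sum_const, card_univ, smul_eq_mul, mul_comm]
  obtain ⟨g, -, hg⟩ := exists_le_of_sum_le univ_nonempty hsum
  exact ⟨g, hg⟩

theorem exists_card_le_two_mul_card_symmDiff_vadd {A B : Finset G}
    (hAB : #A + #B = Fintype.card G) :
    ∃ g : G, Fintype.card G ≤ 2 * #(A ∆ (g +ᵥ B)) := by
  obtain ⟨g, hg⟩ := exists_card_inter_vadd_mul_card_le A B
  have hinter : 4 * #(A ∩ (g +ᵥ B)) ≤ Fintype.card G := by
    refine Nat.le_of_mul_le_mul_right ?_ (Fintype.card_pos (α := G))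
    calc 4 * #(A ∩ (g +ᵥ B)) * Fintype.card G ≤ 4 * #A * #B := by linarith
      _ ≤ (#A + #B) ^ 2 := four_mul_le_sq_add _ _
      _ = Fintype.card G * Fintype.card G := by rw [hAB, sq]
  have hsymm := card_symmDiff_add_two_mul_card_inter A (g +ᵥ B)
  rw [card_vadd_finset] at hsymm
  exact ⟨g, by omega⟩

end AddGroup

theorem exists_binVal_eq {l s : ℕ} (hs : s < 2 ^ l) : ∃ a : Fin l → Bool, binVal l a = s := by
  let digit : Fin l → Fin 2 := finFunctionFinEquiv.symm ⟨s, hs⟩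
  have hdigit : ∑ i, (digit i : ℕ) * 2 ^ (i : ℕ) = s := by
    rw [← finFunctionFinEquiv_apply, Equiv.apply_symm_apply]
  refine ⟨fun j => decide (digit j.rev = 1), ?_⟩
  rw [binVal, ← hdigit, ← Equiv.sum_comp Fin.revPerm]
  refine sum_congr rfl fun j _ => ?_
  have hexp : l - 1 - (Fin.rev j : ℕ) = j := by
    rw [Fin.val_rev]
    omega
  rw [Fin.revPerm_apply, Fin.rev_rev, hexp]
  generalize digit j = d
  fin_cases d <;> simp

namespace OBDD

variable {n w : ℕ} {M : OBDD n w}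

/-- The set of variables that `M` reads in its first `k` steps. -/
def readVars (M : OBDD n w) (k : ℕ) : Finset (Fin n) := {j | (M.ord.symm j : ℕ) < k}

/-- The state of `M` on input `x` after its first `k` steps. -/
def stateAfter (M : OBDD n w) (k : ℕ) (x : Fin n → Bool) : Fin w :=
  ((List.finRange n).take k).foldl (fun s i => M.tr i s (x (M.ord i))) M.start

theorem stateAfter_congr {k : ℕ} {x y : Fin n → Bool} (h : ∀ j ∈ M.readVars k, x j = y j) :
    M.stateAfter k x = M.stateAfter k y := by
  refine List.foldl_ext _ _ _ fun s i hi => ?_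
  have hread : M.ord i ∈ M.readVars k := by
    obtain ⟨m, hm, rfl⟩ := List.mem_take_iff_getElem.1 hi
    have hmk : m < k := (lt_min_iff.1 hm).1
    simpa [readVars] using hmk
  rw [h _ hread]

theorem final_congr {k : ℕ} {x y : Fin n → Bool} (hstate : M.stateAfter k x = M.stateAfter k y)
    (h : ∀ j ∉ M.readVars k, x j = y j) : M.final x = M.final y := by
  rw [final, final, ← List.take_append_drop k (List.finRange n), List.foldl_append,
    List.foldl_append]
  change List.foldl _ (M.stateAfter k x) _ = List.foldl _ (M.stateAfter k y) _
  rw [hstate]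
  refine List.foldl_ext _ _ _ fun s i hi => ?_
  have hunread : M.ord i ∉ M.readVars k := by
    obtain ⟨m, hm, rfl⟩ := List.mem_drop_iff_getElem.1 hi
    simp [readVars]
  rw [h _ hunread]

theorem final_piecewise {k : ℕ} {x y : Fin n → Bool}
    (hstate : M.stateAfter k x = M.stateAfter k y) :
    M.final ((M.readVars k).piecewise x y) = M.final y := by
  refine final_congr (k := k) ?_ fun j hj => piecewise_eq_of_notMem _ _ _ hj
  rw [← hstate]
  exact stateAfter_congr fun j hj => piecewise_eq_of_mem _ _ _ hj

theorem card_le_width_of_fooling {ι : Type*} (M : OBDD n w) (k : ℕ) (I : Finset ι)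
    (E : ι → Fin n → Bool) (hE : ∀ a ∈ I, M.Accepts (E a))
    (hfool : ∀ a ∈ I, ∀ b ∈ I, M.Accepts ((M.readVars k).piecewise (E a) (E b)) → a = b) :
    #I ≤ w := by
  have hinj : Set.InjOn (fun a => M.stateAfter k (E a)) I := by
    intro a ha b hb hab
    refine hfool a ha b hb ?_
    rw [Accepts, final_piecewise hab]
    exact hE b hb
  simpa using card_le_card_of_injOn _ (fun _ _ => mem_univ _) hinj

theorem exists_card_filter_mem_readVars_eq (M : OBDD n w) {S : Finset (Fin n)} {m : ℕ}
    (hm : m < #S) : ∃ k, #{j ∈ S | j ∈ M.readVars k} = m := by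
  obtain ⟨k, hk⟩ := exists_card_filter_lt_eq
    (S := S.map M.ord.symm.toEmbedding) (hm.trans_eq (card_map _).symm)
  refine ⟨k, ?_⟩
  rw [filter_map, card_map] at hk
  simpa [readVars] using hk

end OBDD

section SEQ

variable {q : ℕ}

/-- The position in the input of `SEQ q` of the variable `xᵢ` (for `.inl i`) or `yᵢ`
(for `.inr i`). -/
def dataIndex : Fin q ⊕ Fin q ↪ Fin (2 * q + Nat.clog 2 q) :=
  (finSumFinEquiv.trans (finCongr (two_mul q).symm)).toEmbedding.trans (Fin.castAddEmb _)

theorem SEQ_eq_true_iff {x : Fin (2 * q + Nat.clog 2 q) → Bool} {s : Fin q}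
    (hs : seqShift q x = s) :
    SEQ q x = true ↔ ∀ i : Fin q, x (dataIndex (.inl i)) = x (dataIndex (.inr (i + s))) := by
  rw [SEQ, decide_eq_true_iff]
  refine forall_congr' fun i => ?_
  have hy : (dataIndex (.inr (i + s)) : ℕ) = q + (i + seqShift q x) % q := by
    simp [dataIndex, hs, Fin.val_add, add_comm]
  simp only [← hy]
  rfl

/-- The input of `SEQ q` with `x = z`, with `yᵢ₊ₛ = zᵢ`, and with shift bits `a`: an input with
value `true` if `a` encodes `s`. -/
def shiftedInput (s : Fin q) (a : Fin (Nat.clog 2 q) → Bool) (z : Fin q → Bool) :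
    Fin (2 * q + Nat.clog 2 q) → Bool :=
  Fin.append (Sum.elim z (fun j => z (j - s)) ∘
    (finSumFinEquiv.trans (finCongr (two_mul q).symm)).symm) a

section shiftedInput

variable (s : Fin q) (a : Fin (Nat.clog 2 q) → Bool) (z : Fin q → Bool)

@[simp]
theorem shiftedInput_dataIndex (u : Fin q ⊕ Fin q) :
    shiftedInput s a z (dataIndex u) = Sum.elim z (fun j => z (j - s)) u := by
  simp [shiftedInput, dataIndex]

@[simp]
theorem shiftedInput_natAdd (j : Fin (Nat.clog 2 q)) :
    shiftedInput s a z (Fin.natAdd (2 * q) j) = a j :=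
  Fin.append_right _ _ _

theorem seqShift_piecewise_shiftedInput (R : Finset (Fin (2 * q + Nat.clog 2 q)))
    (z' : Fin q → Bool) :
    seqShift q (R.piecewise (shiftedInput s a z) (shiftedInput s a z')) = binVal _ a := by
  rw [seqShift]
  congr 1
  funext j
  change R.piecewise (shiftedInput s a z) (shiftedInput s a z') (Fin.natAdd (2 * q) j) = a j
  simp [piecewise]

theorem SEQ_piecewise_shiftedInput_iff [NeZero q] {s : Fin q} {a : Fin (Nat.clog 2 q) → Bool}
    (ha : binVal _ a = s) (R : Finset (Fin (2 * q + Nat.clog 2 q))) (z z' : Fin q → Bool) :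
    SEQ q (R.piecewise (shiftedInput s a z) (shiftedInput s a z')) = true ↔
      ∀ i, (if dataIndex (.inl i) ∈ R then z i else z' i) =
        if dataIndex (.inr (i + s)) ∈ R then z i else z' i := by
  rw [SEQ_eq_true_iff (s := s) (by rw [seqShift_piecewise_shiftedInput, ha])]
  simp [piecewise]

theorem SEQ_shiftedInput [NeZero q] {s : Fin q} {a : Fin (Nat.clog 2 q) → Bool}
    (ha : binVal _ a = s) (z : Fin q → Bool) : SEQ q (shiftedInput s a z) = true := by
  rw [← piecewise_same univ (shiftedInput s a z), SEQ_piecewise_shiftedInput_iff ha]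
  simp

end shiftedInput

/-- The pairs `(xᵢ, yᵢ₊ₛ)`, represented by `i`, exactly one member of which lies in `R`. An OBDD
that has read exactly the variables in `R` must remember one bit for each of them. -/
def separatedPairs (R : Finset (Fin (2 * q + Nat.clog 2 q))) (s : Fin q) : Finset (Fin q) :=
  {i | ¬(dataIndex (.inl i) ∈ R ↔ dataIndex (.inr (i + s)) ∈ R)}

variable [NeZero q]

theorem exists_le_two_mul_card_separatedPairs {R : Finset (Fin (2 * q + Nat.clog 2 q))}
    (hR : #{u : Fin q ⊕ Fin q | dataIndex u ∈ R} = q) :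
    ∃ s, q ≤ 2 * #(separatedPairs R s) := by
  let U : Finset (Fin q ⊕ Fin q) := {u | dataIndex u ∈ R}
  have hU (u : Fin q ⊕ Fin q) : u ∈ U ↔ dataIndex u ∈ R := mem_filter_univ u
  obtain ⟨g, hg⟩ := exists_card_le_two_mul_card_symmDiff_vadd (A := U.toLeft) (B := U.toRight)
    (by rw [card_toLeft_add_card_toRight, hR, Fintype.card_fin])
  have heq : separatedPairs R (-g) = U.toLeft ∆ (g +ᵥ U.toRight) := by
    ext i
    have hvadd : i ∈ g +ᵥ U.toRight ↔ i + -g ∈ U.toRight := by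
      rw [← neg_vadd_mem_iff, vadd_eq_add, add_comm]
    simp only [separatedPairs, mem_filter_univ, mem_symmDiff, hvadd, mem_toLeft, mem_toRight, hU]
    tauto
  rw [Fintype.card_fin, ← heq] at hg
  exact ⟨-g, hg⟩

variable {w : ℕ} {M : OBDD (2 * q + Nat.clog 2 q) w}

theorem two_pow_card_separatedPairs_le_width (hM : M.Represents (SEQ q)) (k : ℕ) (s : Fin q) :
    2 ^ #(separatedPairs (M.readVars k) s) ≤ w := by
  obtain ⟨a, ha⟩ := exists_binVal_eq (s.isLt.trans_le (Nat.le_pow_clog one_lt_two q))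
  rw [← card_powerset]
  refine M.card_le_width_of_fooling k _ (fun T => shiftedInput s a fun i => decide (i ∈ T)) ?_ ?_
  · exact fun T _ => (hM _).2 (SEQ_shiftedInput ha _)
  · intro T hT T' hT' hacc
    rw [hM, SEQ_piecewise_shiftedInput_iff ha] at hacc
    ext i
    by_cases hi : i ∈ separatedPairs (M.readVars k) s
    · have hsep := (mem_filter.1 hi).2
      have hbit := hacc i
      by_cases hx : dataIndex (.inl i) ∈ M.readVars k
      · have hy : dataIndex (.inr (i + s)) ∉ M.readVars k := fun hy => hsep (iff_of_true hx hy)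
        simpa [hx, hy] using hbit
      · have hy : dataIndex (.inr (i + s)) ∈ M.readVars k := by
          by_contra hy
          exact hsep (iff_of_false hx hy)
        simpa [hx, hy] using hbit.symm
    · exact iff_of_false (fun h => hi (mem_powerset.1 hT h)) fun h => hi (mem_powerset.1 hT' h)

theorem two_pow_half_le_width_of_represents_SEQ (hM : M.Represents (SEQ q)) :
    2 ^ ((q + 1) / 2) ≤ w := by
  obtain ⟨k, hk⟩ := M.exists_card_filter_mem_readVars_eq (S := univ.map dataIndex) (m := q)
    (by simp [NeZero.pos])
  rw [filter_map, card_map] at hk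
  obtain ⟨s, hs⟩ := exists_le_two_mul_card_separatedPairs hk
  calc 2 ^ ((q + 1) / 2) ≤ 2 ^ #(separatedPairs (M.readVars k) s) :=
        Nat.pow_le_pow_right two_pos (by omega)
    _ ≤ w := two_pow_card_separatedPairs_le_width hM k s

end SEQ

/-- every deterministic OBDD representing `SEQ_q` has width `2^{Ω(q)}`. -/
theorem stmt11 :
    ∃ c : ℝ, 0 < c ∧
      ∀ q : ℕ, 2 ≤ q → ∀ (w : ℕ) (M : OBDD (2 * q + Nat.clog 2 q) w),
        M.Represents (SEQ q) → (2 : ℝ) ^ (c * (q : ℝ)) ≤ (w : ℝ) := by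
  refine ⟨1 / 2, by norm_num, fun q hq w M hM => ?_⟩
  have : NeZero q := ⟨by omega⟩
  have hhalf : (q : ℝ) ≤ 2 * ((q + 1) / 2 : ℕ) := by
    norm_cast
    omega
  calc (2 : ℝ) ^ (1 / 2 * (q : ℝ)) ≤ 2 ^ (((q + 1) / 2 : ℕ) : ℝ) :=
        Real.rpow_le_rpow_of_exponent_le one_le_two (by linarith)
    _ = 2 ^ ((q + 1) / 2) := Real.rpow_natCast _ _
    _ ≤ w := mod_cast two_pow_half_le_width_of_represents_SEQ hM
end

section
/- There is a constant c such that for every integer q ≥ 2 there is a quantum OBDD of width at most c·q² representing the shifted equality function SEQ_q with bounded error, i.e. deciding every input correctly (accepting with probability ≥ 2/3 on 1-inputs and ≤ 1/3 on 0-inputs). In terms of the input length n = 2q + ⌈log₂ q⌉ the width is O(n²). -/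
set_option maxHeartbeats 1000000
/-!
A probabilistic (Chernoff) argument provides `O(q)` sign vectors `r_k` on `ZMod q` such that, for
every nonempty `D`, the average over `k` of `∏ a ∈ D, r_k a` is at most `1 / 2` in absolute value.
Start in the uniform superposition of the basis states `(0, k)`. Reading the shift bits first moves
the first register to the shift `S`, in all branches `k` at once. Each later bit `x_a` or `y_b` that
is set multiplies branch `k` by `r_k a`, respectively `r_k (b - S)`. The two factors belonging to
equal bits cancel, so branch `k` ends up with the sign `∏ a ∈ D, r_k a`, where `D` is the set of
mismatches. Measuring whether the second register is still uniform accepts with probability the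
square of the average of these signs: `1` if `D = ∅`, and at most `1 / 4` otherwise.
-/

open Finset Fintype Module
open scoped InnerProductSpace Matrix

section Characters

variable {G κ ι : Type*}

theorem sum_exp_mul_char [Group G] [Fintype G] {χ : G →* ℤˣ} (hχ : χ ≠ 1) (t : ℝ) :
    ∑ g, Real.exp (t * (χ g : ℤ)) = card G * Real.cosh t := by
  have exp_eq (g : G) :
      Real.exp (t * (χ g : ℤ)) = Real.cosh t + ((χ g : ℤ) : ℝ) * Real.sinh t := by
    rcases Int.units_eq_one_or (χ g) with h | h <;> simp [h, ← sub_eq_add_neg]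
  have sum_eq_zero : ∑ g, ((χ g : ℤ) : ℝ) = 0 := by
    refine sum_hom_units_eq_zero
      ((Int.castRingHom ℝ : ℤ →* ℝ).comp ((Units.coeHom ℤ).comp χ)) fun h => hχ ?_
    ext g
    simpa using DFunLike.congr_fun h g
  simp_rw [exp_eq, sum_add_distrib, ← sum_mul, sum_eq_zero]
  simp

theorem sum_cosh_mul_sum_char [Group G] [Fintype G] [Fintype κ] [DecidableEq κ] {χ : G →* ℤˣ}
    (hχ : χ ≠ 1) (t : ℝ) :
    ∑ g : κ → G, Real.cosh (t * ∑ k, ((χ (g k) : ℤ) : ℝ)) = (card G * Real.cosh t) ^ card κ := by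
  have sum_exp (t : ℝ) :
      ∑ g : κ → G, Real.exp (t * ∑ k, ((χ (g k) : ℤ) : ℝ)) =
        (card G * Real.cosh t) ^ card κ := by
    simp_rw [mul_sum, Real.exp_sum, ← sum_exp_mul_char hχ]
    rw [← Fintype.prod_sum fun (_ : κ) g => Real.exp (t * (χ g : ℤ)), prod_const, card_univ]
  simp_rw [Real.cosh_eq (t * _), ← neg_mul, ← sum_div, sum_add_distrib, sum_exp, Real.cosh_neg]
  ring

theorem exp_abs_le_two_mul_cosh (x : ℝ) : Real.exp |x| ≤ 2 * Real.cosh x := by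
  rw [← Real.cosh_abs, Real.cosh_eq]
  linarith [Real.exp_pos (-|x|)]

/- The union bound is applied to the potential `∑ χ, cosh (ε ∑ k, χ (g k))`, whose average over `g`
is at most `#S * exp (ε² * card κ / 2)`. -/
theorem exists_forall_abs_sum_char_le [Group G] [Finite G] [Fintype κ] {S : Finset (G →* ℤˣ)}
    (hS : 1 ∉ S) {ε : ℝ} (hε : 0 < ε)
    (hcard : 2 * (#S : ℝ) ≤ Real.exp (ε ^ 2 * card κ / 2)) :
    ∃ g : κ → G, ∀ χ ∈ S, |∑ k, ((χ (g k) : ℤ) : ℝ)| ≤ ε * card κ := by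
  classical
  cases nonempty_fintype G
  set B : ℝ := Real.exp (ε ^ 2 * card κ / 2)
  have potential_le : ∑ g : κ → G, ∑ χ ∈ S, Real.cosh (ε * ∑ k, ((χ (g k) : ℤ) : ℝ)) ≤
      ∑ _g : κ → G, #S * B := by
    calc _ = ∑ _χ ∈ S, (card G * Real.cosh ε) ^ card κ := by
          rw [sum_comm]
          exact sum_congr rfl fun _ hχ => sum_cosh_mul_sum_char (ne_of_mem_of_not_mem hχ hS) ε
      _ ≤ ∑ _χ ∈ S, (card G * Real.exp (ε ^ 2 / 2)) ^ card κ := by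
          gcongr
          exact Real.cosh_le_exp_half_sq ε
      _ = _ := by
          simp only [B, mul_pow, ← Real.exp_nat_mul, sum_const, nsmul_eq_mul, card_univ,
            Fintype.card_pi, prod_const, Nat.cast_pow]
          ring_nf
  obtain ⟨g, -, hg⟩ := exists_le_of_sum_le univ_nonempty potential_le
  refine ⟨g, fun χ hχ => ?_⟩
  have cosh_le := (single_le_sum (fun _ _ => (Real.cosh_pos _).le) hχ).trans hg
  set X : ℝ := ∑ k, ((χ (g k) : ℤ) : ℝ)
  have exp_le : Real.exp (ε * |X|) ≤ Real.exp (ε * (ε * card κ)) := by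
    calc Real.exp (ε * |X|) = Real.exp |ε * X| := by rw [abs_mul, abs_of_pos hε]
      _ ≤ 2 * Real.cosh (ε * X) := exp_abs_le_two_mul_cosh _
      _ ≤ 2 * (#S * B) := by gcongr
      _ = 2 * #S * B := by ring
      _ ≤ B * B := by gcongr
      _ = Real.exp (ε * (ε * card κ)) := by rw [← Real.exp_add]; ring_nf
  exact le_of_mul_le_mul_left (Real.exp_le_exp.1 exp_le) hε

/-- The character of the cube `ι → ℤˣ` that multiplies the coordinates in `D` (in additive notation,
the parity of the bits in `D`). -/
def parityChar (D : Finset ι) : (ι → ℤˣ) →* ℤˣ :=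
  ∏ i ∈ D, Pi.evalMonoidHom (fun _ => ℤˣ) i

theorem parityChar_apply (D : Finset ι) (r : ι → ℤˣ) : parityChar D r = ∏ i ∈ D, r i := by
  simp [parityChar]

theorem parityChar_ne_one {D : Finset ι} (hD : D.Nonempty) : parityChar D ≠ 1 := by
  classical
  obtain ⟨i, hi⟩ := hD
  intro h
  have := DFunLike.congr_fun h (Pi.mulSingle i (-1))
  simp [parityChar_apply, Pi.mulSingle_apply, hi] at this

theorem exists_biased_signs [Fintype ι] [Fintype κ] {ε : ℝ} (hε : 0 < ε)
    (hcard : (2 : ℝ) ^ (card ι + 1) ≤ Real.exp (ε ^ 2 * card κ / 2)) :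
    ∃ r : κ → ι → ℤˣ, ∀ D : Finset ι, D.Nonempty →
      |∑ k, (((∏ i ∈ D, r k i : ℤˣ) : ℤ) : ℝ)| ≤ ε * card κ := by
  classical
  obtain ⟨r, hr⟩ := exists_forall_abs_sum_char_le (κ := κ)
    (S := (univ.filter Finset.Nonempty).image (parityChar (ι := ι)))
    (by simpa using fun D hD => parityChar_ne_one hD) hε (by
      refine le_trans ?_ hcard
      rw [pow_succ']
      gcongr
      exact_mod_cast card_image_le.trans ((card_filter_le _ _).trans (by simp)))
  refine ⟨r, fun D hD => ?_⟩
  simpa only [parityChar_apply] using hr (parityChar D) (mem_image_of_mem _ (by simpa using hD))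

end Characters

theorem exists_orthonormalBasis_fin_extension {𝕜 E ι : Type*} [RCLike 𝕜]
    [NormedAddCommGroup E] [InnerProductSpace 𝕜 E] [FiniteDimensional 𝕜 E] [Finite ι] {n : ℕ}
    (hn : finrank 𝕜 E = n) {u : ι → E} (hu : Orthonormal 𝕜 u) :
    ∃ (b : OrthonormalBasis (Fin n) 𝕜 E) (f : ι ↪ Fin n), ∀ i, b (f i) = u i := by
  cases nonempty_fintype ι
  have card_le : card ι ≤ card (Fin n) := by
    simpa [hn] using hu.linearIndependent.fintype_card_le_finrank
  obtain ⟨f⟩ := Function.Embedding.nonempty_of_card_le card_le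
  have hv : Orthonormal 𝕜 ((Set.range f).domRestrict (Function.extend f u 0)) := by
    convert hu.comp (Equiv.ofInjective f f.injective).symm (Equiv.injective _) using 1
    ext ⟨_, i, rfl⟩ : 1
    simp [f.injective.extend_apply, Equiv.ofInjective_symm_apply]
  obtain ⟨b, hb⟩ := hv.exists_orthonormalBasis_extension_of_card_eq (by simpa using hn)
  exact ⟨b, f, fun i => by rw [hb _ ⟨i, rfl⟩, f.injective.extend_apply]⟩

namespace QOBDD

variable {n w : ℕ} {E : Type*} [NormedAddCommGroup E] [InnerProductSpace ℂ E]

/-- The QOBDD with state space `E`, written in coordinates by the orthonormal basis `b`, that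
applies `U v c` when the variable `v` reads `c`. The variables are read from the last to the first,
so that the product of the gates in the order of the variables acts on the start state. -/
noncomputable def ofBasis (b : OrthonormalBasis (Fin w) ℂ E) (U : Fin n → Bool → E ≃ₗᵢ[ℂ] E)
    (start : Fin w) (acc : Finset (Fin w)) : QOBDD n w where
  ord := Fin.revPerm
  G i c := ⟨b.toBasis.toMatrix (b.map (U i.rev c)), b.toMatrix_orthonormalBasis_mem_unitary _⟩
  start := start
  acc := acc

theorem toMatrix_map_mulVec_repr (b : OrthonormalBasis (Fin w) ℂ E) (V : E ≃ₗᵢ[ℂ] E) (ψ : E) :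
    b.toBasis.toMatrix (b.map V) *ᵥ b.repr ψ = b.repr (V ψ) := by
  have coe_repr (b : OrthonormalBasis (Fin w) ℂ E) (φ : E) :
      (b.repr φ : Fin w → ℂ) = b.toBasis.repr φ := by
    ext j
    simp
  have repr_eq : b.repr ψ = (b.map V).repr (V ψ) := by simp [OrthonormalBasis.map]
  rw [repr_eq, coe_repr, coe_repr, ← (b.map V).coe_toBasis]
  exact (b.map V).toBasis.toMatrix_mulVec_repr b.toBasis (V ψ)

theorem finalVec_ofBasis (b : OrthonormalBasis (Fin w) ℂ E) (U : Fin n → Bool → E ≃ₗᵢ[ℂ] E)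
    (start : Fin w) (acc : Finset (Fin w)) (x : Fin n → Bool) :
    (ofBasis b U start acc).finalVec x =
      b.repr ((List.ofFn fun v => U v (x v)).prod (b start)) := by
  have foldr_eq (L : List (Fin n)) :
      L.foldr (fun v ψ => b.toBasis.toMatrix (b.map (U v (x v))) *ᵥ ψ) (Pi.single start 1) =
        b.repr ((L.map fun v => U v (x v)).prod (b start)) := by
    induction L with
    | nil => simp
    | cons v L ih => simp [ih, toMatrix_map_mulVec_repr]
  rw [List.ofFn_eq_map, ← foldr_eq, ← List.foldl_reverse, List.finRange_reverse, List.foldl_map]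
  rfl

theorem acceptProb_ofBasis (b : OrthonormalBasis (Fin w) ℂ E) (U : Fin n → Bool → E ≃ₗᵢ[ℂ] E)
    (start : Fin w) (acc : Finset (Fin w)) (x : Fin n → Bool) :
    (ofBasis b U start acc).acceptProb x =
      ∑ j ∈ acc, ‖⟪b j, (List.ofFn fun v => U v (x v)).prod (b start)⟫_ℂ‖ ^ 2 := by
  simp only [acceptProb, finalVec_ofBasis, Complex.normSq_eq_norm_sq, b.repr_apply_apply]
  rfl

theorem exists_acceptProb_eq_sum_norm_inner_sq [FiniteDimensional ℂ E] {ι : Type*} [Fintype ι]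
    (hw : finrank ℂ E = w) {u : ι → E} (hu : Orthonormal ℂ u) (U : Fin n → Bool → E ≃ₗᵢ[ℂ] E)
    (i₀ : ι) :
    ∃ M : QOBDD n w, ∀ x, M.acceptProb x =
      ∑ i, ‖⟪u i, (List.ofFn fun v => U v (x v)).prod (u i₀)⟫_ℂ‖ ^ 2 := by
  obtain ⟨b, f, hb⟩ := exists_orthonormalBasis_fin_extension hw hu
  refine ⟨ofBasis b U (f i₀) (univ.map f), fun x => ?_⟩
  simp [acceptProb_ofBasis, hb]

end QOBDD

section Gates

variable {Q α κ : Type*} [Fintype Q] [Fintype α] [Fintype κ]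

/-- The diagonal unitary with the eigenvalues `d`, as an operator on the state space with the basis
states `Q`. -/
noncomputable def phaseGate :
    (Q → unitary ℂ) →* EuclideanSpace ℂ Q ≃ₗᵢ[ℂ] EuclideanSpace ℂ Q where
  toFun d := LinearIsometryEquiv.piLpCongrRight 2 fun p => d p • LinearIsometryEquiv.refl ℂ ℂ
  map_one' := by ext; simp
  map_mul' d d' := by ext; simp [mul_assoc]

theorem phaseGate_apply (d : Q → unitary ℂ) (ψ : EuclideanSpace ℂ Q) (p : Q) :
    phaseGate d ψ p = d p * ψ p := by
  simp [phaseGate]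

variable (κ) in
/-- The permutation unitary that adds `c` to the first of two registers. `Multiplicative` turns
sums of shifts into products of gates. -/
noncomputable def shiftGate [AddGroup α] :
    Multiplicative α →* EuclideanSpace ℂ (α × κ) ≃ₗᵢ[ℂ] EuclideanSpace ℂ (α × κ) where
  toFun c := LinearIsometryEquiv.piLpCongrLeft 2 ℂ ℂ
    ((Equiv.addLeft c.toAdd).prodCongr (Equiv.refl κ))
  map_one' := by
    ext ψ p
    change ψ (-0 + p.1, p.2) = ψ p
    simp
  map_mul' c c' := by
    ext ψ p
    change ψ (-(c.toAdd + c'.toAdd) + p.1, p.2) = ψ (-c'.toAdd + (-c.toAdd + p.1), p.2)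
    rw [neg_add_rev, add_assoc]

theorem shiftGate_apply [AddGroup α] (c : Multiplicative α) (ψ : EuclideanSpace ℂ (α × κ))
    (p : α × κ) : shiftGate κ c ψ p = ψ (-c.toAdd + p.1, p.2) :=
  rfl

variable (κ) in
/-- The state in which the first register holds `a` and the second is in the uniform superposition
of its basis states (a unit vector if `κ` is nonempty, and `0` otherwise). -/
noncomputable def uniformState [DecidableEq α] (a : α) : EuclideanSpace ℂ (α × κ) :=
  WithLp.toLp 2 fun p => if p.1 = a then ((√(card κ) : ℝ) : ℂ)⁻¹ else 0

theorem shiftGate_uniformState [DecidableEq α] [AddGroup α] (c : Multiplicative α) (a : α) :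
    shiftGate κ c (uniformState κ a) = uniformState κ (c.toAdd + a) := by
  ext p
  simp [shiftGate_apply, uniformState, neg_add_eq_iff_eq_add]

theorem inner_uniformState_phaseGate [DecidableEq α] (d : α × κ → unitary ℂ) (a a' : α) :
    ⟪uniformState κ a, phaseGate d (uniformState κ a')⟫_ℂ =
      if a = a' then (∑ k, (d (a, k) : ℂ)) / card κ else 0 := by
  have norm_sq : ((√(card κ) : ℝ) : ℂ)⁻¹ * ((√(card κ) : ℝ) : ℂ)⁻¹ = (card κ : ℂ)⁻¹ := by
    rw [← mul_inv, ← Complex.ofReal_mul, Real.mul_self_sqrt (by positivity), Complex.ofReal_natCast]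
  split_ifs with h
  · subst h
    simp [PiLp.inner_apply, phaseGate_apply, uniformState, Fintype.sum_prod_type, mul_assoc,
      norm_sq, ← sum_mul, div_eq_mul_inv]
  · simp [PiLp.inner_apply, phaseGate_apply, uniformState, Fintype.sum_prod_type, Ne.symm h]

theorem orthonormal_uniformState [DecidableEq α] [Nonempty κ] :
    Orthonormal ℂ (uniformState κ : α → EuclideanSpace ℂ (α × κ)) := by
  rw [orthonormal_iff_ite]
  intro a a'
  simpa using inner_uniformState_phaseGate (κ := κ) 1 a a'

theorem QOBDD.exists_acceptProb_eq_norm_average_sq [AddCommGroup α] [Nonempty κ] {m l : ℕ}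
    (θ : Fin m → Bool → α × κ → unitary ℂ) (wt : Fin l → Bool → α) :
    ∃ M : QOBDD (m + l) (card α * card κ), ∀ x, M.acceptProb x =
      ‖(∑ k, ∏ i, (θ i (x (Fin.castAdd l i)) (∑ j, wt j (x (Fin.natAdd m j)), k) : ℂ)) /
        card κ‖ ^ 2 := by
  classical
  let U (v : Fin (m + l)) (b : Bool) : EuclideanSpace ℂ (α × κ) ≃ₗᵢ[ℂ] EuclideanSpace ℂ (α × κ) :=
    Fin.addCases (fun i => phaseGate (θ i b)) (fun j => shiftGate κ (.ofAdd (wt j b))) v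
  obtain ⟨M, hM⟩ := QOBDD.exists_acceptProb_eq_sum_norm_inner_sq
    (finrank_euclideanSpace.trans (card_prod α κ))
    (orthonormal_uniformState (α := α) (κ := κ)) U 0
  refine ⟨M, fun x => ?_⟩
  set a : α := ∑ j, wt j (x (Fin.natAdd m j))
  have prod_eq : (List.ofFn fun v => U v (x v)).prod =
      phaseGate (∏ i, θ i (x (Fin.castAdd l i))) * shiftGate κ (.ofAdd a) := by
    have phases : (List.ofFn fun i => U (Fin.castAdd l i) (x (Fin.castAdd l i))).prod =
        phaseGate (∏ i, θ i (x (Fin.castAdd l i))) := by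
      simp [U, ← List.prod_ofFn, map_list_prod, List.map_ofFn, Function.comp_def]
    have shifts : (List.ofFn fun j => U (Fin.natAdd m j) (x (Fin.natAdd m j))).prod =
        shiftGate κ (.ofAdd a) := by
      simp [U, a, ofAdd_sum, ← List.prod_ofFn, map_list_prod, List.map_ofFn, Function.comp_def]
    rw [List.ofFn_add, List.prod_append, ← phases, ← shifts]
    rfl
  simp [hM, prod_eq, shiftGate_uniformState, inner_uniformState_phaseGate, apply_ite, ite_pow]

end Gates

/-- A sign as a unit complex number, the eigenvalue that a phase gate multiplies by. -/
def signPhase : ℤˣ →* unitary ℂ where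
  toFun s := ⟨((s : ℤ) : ℂ), by
    rcases Int.units_eq_one_or s with rfl | rfl <;> simp [Unitary.mem_iff]⟩
  map_one' := by simp
  map_mul' s s' := by ext; simp

theorem coe_signPhase (s : ℤˣ) : (signPhase s : ℂ) = (s : ℤ) :=
  rfl

section SEQ

variable {q : ℕ}

/-- The summand of `seqShift` contributed by the `j`-th shift bit when it reads `b`. -/
def seqWeight (q : ℕ) (j : Fin (Nat.clog 2 q)) (b : Bool) : ZMod q :=
  if b then 2 ^ (Nat.clog 2 q - 1 - (j : ℕ)) else 0

theorem sum_seqWeight (x : Fin (2 * q + Nat.clog 2 q) → Bool) :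
    ∑ j, seqWeight q j (x (Fin.natAdd (2 * q) j)) = seqShift q x := by
  simp [seqWeight, seqShift, binVal, Fin.natAdd]

/-- The coordinate of `x` with which the `v`-th bit of the word `x y` is compared when the shift
is `a`: bit `v < q` is `x_v` itself, and bit `q + k` is `y_k`, compared with `x_{k - a}`. -/
def seqCoord (v : Fin (2 * q)) (a : ZMod q) : ZMod q :=
  if (v : ℕ) < q then (v : ℕ) else (v : ℕ) - a

variable [NeZero q] (x : Fin (2 * q + Nat.clog 2 q) → Bool)

/-- The coordinates at which `x` differs from the shifted `y`, indexed from `0` by `ZMod q`. -/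
def mismatch : Finset (ZMod q) :=
  {a | x ⟨a.val, by have := a.val_lt; omega⟩ ≠
    x ⟨q + (a + seqShift q x).val, by have := (a + seqShift q x).val_lt; omega⟩}

theorem SEQ_eq_true_iff_s12 : SEQ q x = true ↔ mismatch x = ∅ := by
  obtain ⟨k, rfl⟩ := Nat.exists_eq_succ_of_ne_zero (NeZero.ne q)
  simp only [SEQ, decide_eq_true_eq, mismatch, ZMod.val_add, ZMod.val_natCast, Nat.add_mod_mod,
    filter_eq_empty_iff, mem_univ, ne_eq, Decidable.not_not, forall_const]
  rfl

theorem prod_fin_eq_prod_zmod {M : Type*} [CommMonoid M] (f : Fin q → M) :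
    ∏ i, f i = ∏ a : ZMod q, f ⟨a.val, a.val_lt⟩ := by
  obtain ⟨k, rfl⟩ := Nat.exists_eq_succ_of_ne_zero (NeZero.ne q)
  rfl

theorem prod_seqCoord (r : ZMod q → ℤˣ) :
    (∏ v : Fin (2 * q), if x (Fin.castAdd _ v) then r (seqCoord v (seqShift q x)) else 1) =
      ∏ a ∈ mismatch x, r a := by
  set S : ZMod q := ↑(seqShift q x)
  let X (a : ZMod q) : Bool := x ⟨a.val, by have := a.val_lt; omega⟩
  let Y (a : ZMod q) : Bool := x ⟨q + a.val, by have := a.val_lt; omega⟩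
  have split_halves :
      (∏ v : Fin (2 * q), if x (Fin.castAdd _ v) then r (seqCoord v S) else 1) =
        (∏ a, if X a then r a else 1) * ∏ a, if Y a then r (a - S) else 1 := by
    rw [← (finCongr (two_mul q).symm).prod_comp, Fin.prod_univ_add, prod_fin_eq_prod_zmod,
      prod_fin_eq_prod_zmod]
    simp [seqCoord, ZMod.val_lt, X, Y, Fin.castAdd, Fin.natAdd]
  have align_halves :
      (∏ a, if Y a then r (a - S) else 1) = ∏ a, if Y (a + S) then r a else 1 := by
    rw [← Equiv.prod_comp (Equiv.addRight S) fun a => if Y a then r (a - S) else 1]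
    simp
  rw [split_halves, align_halves, ← prod_mul_distrib, mismatch, prod_filter]
  refine prod_congr rfl fun a _ => ?_
  change _ = if X a ≠ Y (a + S) then r a else 1
  cases X a <;> cases Y (a + S) <;> simp [Int.units_mul_self]

theorem exists_qobdd_acceptProb_eq_bias_sq {κ : Type*} [Fintype κ] [Nonempty κ]
    (r : κ → ZMod q → ℤˣ) :
    ∃ M : QOBDD (2 * q + Nat.clog 2 q) (q * card κ), ∀ x, M.acceptProb x =
      ((∑ k, (((∏ a ∈ mismatch x, r k a : ℤˣ) : ℤ) : ℝ)) / card κ) ^ 2 := by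
  have h := QOBDD.exists_acceptProb_eq_norm_average_sq
    (fun v b p => signPhase (if b then r p.2 (seqCoord v p.1) else 1)) (seqWeight q) (κ := κ)
  rw [ZMod.card] at h
  obtain ⟨M, hM⟩ := h
  refine ⟨M, fun x => ?_⟩
  have phase_eq (k : κ) :
      (∏ v : Fin (2 * q), (signPhase
          (if x (Fin.castAdd _ v) then r k (seqCoord v (seqShift q x)) else 1) : ℂ)) =
        ((((∏ a ∈ mismatch x, r k a : ℤˣ) : ℤ) : ℝ) : ℂ) := by
    rw [← prod_seqCoord x (r k), Complex.ofReal_intCast, ← coe_signPhase, map_prod,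
      SubmonoidClass.coe_finsetProd]
  simp_rw [hM, sum_seqWeight, phase_eq]
  rw [← Complex.ofReal_sum, ← Complex.ofReal_natCast, ← Complex.ofReal_div, Complex.norm_real,
    Real.norm_eq_abs, sq_abs]

theorem exists_qobdd_acceptProb_le {κ : Type*} [Fintype κ] [Nonempty κ] {ε : ℝ} (hε : 0 < ε)
    (hcard : (2 : ℝ) ^ (q + 1) ≤ Real.exp (ε ^ 2 * card κ / 2)) :
    ∃ M : QOBDD (2 * q + Nat.clog 2 q) (q * card κ), ∀ x,
      (SEQ q x = true → M.acceptProb x = 1) ∧ (SEQ q x = false → M.acceptProb x ≤ ε ^ 2) := by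
  obtain ⟨r, hr⟩ := exists_biased_signs (ι := ZMod q) (κ := κ) hε (by rwa [ZMod.card])
  obtain ⟨M, hM⟩ := exists_qobdd_acceptProb_eq_bias_sq r
  refine ⟨M, fun x => ⟨fun hx => ?_, fun hx => ?_⟩⟩
  · simp [hM, (SEQ_eq_true_iff_s12 x).1 hx]
  · have nonempty : (mismatch x).Nonempty := by
      rw [nonempty_iff_ne_empty, Ne, ← SEQ_eq_true_iff_s12, hx]
      exact Bool.false_ne_true
    rw [hM, ← sq_abs, abs_div, Nat.abs_cast]
    gcongr
    exact (div_le_iff₀ (by positivity)).2 (hr _ nonempty)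

end SEQ

/-- `SEQ_q` has a bounded-error QOBDD of width `O(q²)`. -/
theorem stmt12 :
    ∃ c : ℕ, 0 < c ∧
      ∀ q : ℕ, 2 ≤ q →
        ∃ W : ℕ, W ≤ c * q ^ 2 ∧
          ∃ M : QOBDD (2 * q + Nat.clog 2 q) W,
            ∀ x, (SEQ q x = true → 2 / 3 ≤ M.acceptProb x) ∧
                 (SEQ q x = false → M.acceptProb x ≤ 1 / 3) := by
  refine ⟨16, by norm_num, fun q hq => ⟨q * card (Fin (16 * q)), ?_, ?_⟩⟩
  · rw [Fintype.card_fin]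
    exact le_of_eq (by ring)
  have : NeZero q := ⟨by omega⟩
  have hcard : (2 : ℝ) ^ (q + 1) ≤ Real.exp ((1 / 2) ^ 2 * card (Fin (16 * q)) / 2) := by
    calc (2 : ℝ) ^ (q + 1) ≤ 2 ^ (2 * q) := by gcongr <;> [norm_num; omega]
      _ ≤ Real.exp 1 ^ (2 * q) := by gcongr; linarith [Real.add_one_le_exp 1]
      _ = _ := by
        rw [← Real.exp_nat_mul, Fintype.card_fin]
        push_cast
        ring_nf
  obtain ⟨M, hM⟩ := exists_qobdd_acceptProb_le one_half_pos hcard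
  refine ⟨M, fun x => ⟨fun hx => ?_, fun hx => ?_⟩⟩
  · rw [(hM x).1 hx]
    norm_num
  · exact ((hM x).2 hx).trans (by norm_num)
end

section
/- There is a constant c such that for all integers k ≥ 1 and m ≥ 2 there is a commutative deterministic 2kOBDD of width at most c·m² representing PJ_{2k−1,m}; in terms of the input length n = 2m⌈log₂ m⌉ the width is O(n²). -/
set_option maxHeartbeats 1000000
/-- A deterministic kOBDD of width `w` over `n` variables: `k` layers reading in order `ord`. -/
structure KOBDD (k n w : ℕ) where
  ord : Equiv.Perm (Fin n)
  tr : Fin k → Fin n → Fin w → Bool → Fin w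
  start : Fin w
  acc : Finset (Fin w)

namespace KOBDD

def layerRun {k n w : ℕ} (M : KOBDD k n w) (t : Fin k) (s : Fin w) (x : Fin n → Bool) : Fin w :=
  (List.finRange n).foldl (fun a i => M.tr t i a (x (M.ord i))) s

def final {k n w : ℕ} (M : KOBDD k n w) (x : Fin n → Bool) : Fin w :=
  (List.finRange k).foldl (fun s t => M.layerRun t s x) M.start

def Accepts {k n w : ℕ} (M : KOBDD k n w) (x : Fin n → Bool) : Prop :=
  M.final x ∈ M.acc

def Represents {k n w : ℕ} (M : KOBDD k n w) (f : (Fin n → Bool) → Bool) : Prop :=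
  ∀ x, M.Accepts x ↔ f x = true

def RepresentsPartial {k n w : ℕ} (M : KOBDD k n w) (F : (Fin n → Bool) → Option Bool) : Prop :=
  ∀ x b, F x = some b → (M.Accepts x ↔ b = true)

/-- Each layer is a commutative OBDD: for every reading order `π`, the reordered layer
(with transitions `tr' i = tr (ord⁻¹(π i))`) computes, from every start state,
the same state transformation as the original layer. -/
def Commutative {k n w : ℕ} (M : KOBDD k n w) : Prop :=
  ∀ (π : Equiv.Perm (Fin n)) (t : Fin k) (s : Fin w) (x : Fin n → Bool),
    (List.finRange n).foldl (fun a i => M.tr t (M.ord.symm (π i)) a (x (π i))) s =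
      M.layerRun t s x

end KOBDD
lemma blockIdx {m l b : ℕ} (hb : b < 2 * m) (j : Fin l) : b * l + (j : ℕ) < 2 * m * l :=
  calc b * l + (j : ℕ) < b * l + l := Nat.add_lt_add_left j.isLt _
    _ = (b + 1) * l := by ring
    _ ≤ 2 * m * l := Nat.mul_le_mul hb (Nat.le_refl l)

/-- Index of the block encoding `f^A(v)` (`side = false`) or `f^B(v)` (`side = true`). -/
def pjBlock (m : ℕ) (side : Bool) (v : ℕ) : ℕ :=
  cond side (m + v % m) (v % m)

lemma pjBlock_lt {m : ℕ} (hm : 0 < m) (side : Bool) (v : ℕ) : pjBlock m side v < 2 * m := by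
  have h := Nat.mod_lt v hm
  cases side with
  | false => exact lt_of_lt_of_le h (by omega)
  | true => exact lt_of_lt_of_eq (Nat.add_lt_add_left h m) (two_mul m).symm

/-- The value `f^A(v)` (`side = false`) or `f^B(v)` (`side = true`) encoded in the input. -/
def pjF (m : ℕ) (hm : 0 < m) (x : Fin (2 * m * Nat.clog 2 m) → Bool)
    (side : Bool) (v : ℕ) : ℕ :=
  binVal (Nat.clog 2 m) (fun j =>
    x ⟨pjBlock m side v * Nat.clog 2 m + (j : ℕ), blockIdx (pjBlock_lt hm side v) j⟩) % m

/-- `v_j`: `v_0 = 0`, `v_{j+1} = f^A(v_j)` for even `j`, `v_{j+1} = f^B(v_j)` for odd `j`. -/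
def pjV (m : ℕ) (hm : 0 < m) (x : Fin (2 * m * Nat.clog 2 m) → Bool) : ℕ → ℕ
  | 0 => 0
  | j + 1 => pjF m hm x (decide (j % 2 = 1)) (pjV m hm x j)

/-- The pointer jumping function `PJ_{k,m}`: the parity of the bits of `v_k`. -/
def PJ (k m : ℕ) (hm : 0 < m) (x : Fin (2 * m * Nat.clog 2 m) → Bool) : Bool :=
  decide ((Nat.digits 2 (pjV m hm x k)).sum % 2 = 1)

/-!
Work in `ZMod m`. There `f^A(v)` is a sum with one term for each input position, depending only on
`v` and on the bit read at that position, so a layer that knows the pointer `v` finds `f^A(v)` by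
adding the terms up in any order. The next layer has to continue from the sum just found, but in
a commutative layer no position can be relied on to come first and to clear the registers. States
therefore also carry the parity of the layer that wrote them, and whichever transition first meets
the wrong parity moves the accumulator into the pointer register. Two elements of `ZMod m` and one
bit make `2 * m ^ 2` states.
-/

namespace KOBDD

variable {k n w : ℕ}

theorem commutative_of_tr_comm (M : KOBDD k n w)
    (h : ∀ t i j s b c, M.tr t j (M.tr t i s b) c = M.tr t i (M.tr t j s c) b) :
    M.Commutative := by
  intro π t s x
  have hcomm : RightCommutative fun a i => M.tr t i a (x (M.ord i)) :=
    ⟨fun a i j => h t i j a _ _⟩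
  have hperm := Equiv.Perm.map_finRange_perm (π.trans M.ord.symm)
  simpa [List.foldl_map, layerRun] using
    hperm.foldl_eq (f := fun a i => M.tr t i a (x (M.ord i))) s

section OfEquiv

variable {S : Type*}

/-- The kOBDD reading the variables in their natural order whose states, numbered by `e`, are the
elements of an arbitrary type `S`. -/
def ofEquiv (e : S ≃ Fin w) (tr : Fin k → Fin n → S → Bool → S) (start : S) (acc : S → Bool) :
    KOBDD k n w where
  ord := Equiv.refl _
  tr t i s b := e (tr t i (e.symm s) b)
  start := e start
  acc := {s | acc (e.symm s)}

variable (e : S ≃ Fin w) (tr : Fin k → Fin n → S → Bool → S) (start : S) (acc : S → Bool)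

theorem layerRun_ofEquiv (t : Fin k) (s : S) (x : Fin n → Bool) :
    (ofEquiv e tr start acc).layerRun t (e s) x =
      e ((List.finRange n).foldl (fun s i => tr t i s (x i)) s) :=
  List.foldl_hom e fun s i => by simp [ofEquiv]

theorem final_ofEquiv (x : Fin n → Bool) :
    (ofEquiv e tr start acc).final x =
      e ((List.finRange k).foldl
        (fun s t => (List.finRange n).foldl (fun s i => tr t i s (x i)) s) start) :=
  List.foldl_hom e fun s t => layerRun_ofEquiv e tr start acc t s x

theorem accepts_ofEquiv (x : Fin n → Bool) :
    (ofEquiv e tr start acc).Accepts x ↔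
      acc ((List.finRange k).foldl
        (fun s t => (List.finRange n).foldl (fun s i => tr t i s (x i)) s) start) = true := by
  rw [Accepts, final_ofEquiv]
  simp [ofEquiv]

theorem commutative_ofEquiv
    (h : ∀ t i j s b c, tr t j (tr t i s b) c = tr t i (tr t j s c) b) :
    (ofEquiv e tr start acc).Commutative :=
  commutative_of_tr_comm _ fun t i j s b c => by simp [ofEquiv, h t i j]

end OfEquiv

end KOBDD

/-- The states of a program that adds up values depending on a pointer: the pointer, the
accumulator, and the parity of the layer that wrote them. -/
abbrev AccState (G : Type*) := G × G × Bool

namespace AccState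

variable {G ι : Type*} [AddMonoid G]

/-- The pointer and the accumulator as a layer of parity `f` reads them: if the state was left by
a layer of the other parity, its accumulator is the new pointer and the sum starts at `0`. -/
def view (f : Bool) (s : AccState G) : G × G :=
  if s.2.2 = f then (s.1, s.2.1) else (s.2.1, 0)

/-- The transition of a layer of parity `f` that adds `d p`, where `p` is the pointer. -/
def step (f : Bool) (d : G → G) (s : AccState G) : AccState G :=
  ((view f s).1, (view f s).2 + d (view f s).1, f)

theorem view_step (f : Bool) (d : G → G) (s : AccState G) :
    view f (step f d s) = ((view f s).1, (view f s).2 + d (view f s).1) := by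
  simp [step, view]

theorem step_comm {G : Type*} [AddCommMonoid G] (f : Bool) (d d' : G → G) (s : AccState G) :
    step f d' (step f d s) = step f d (step f d' s) := by
  rw [step, view_step, step, view_step, add_right_comm]

theorem foldl_step_same (f : Bool) (d : ι → G → G) (L : List ι) (p a : G) :
    L.foldl (fun s i => step f (d i) s) (p, a, f) = (p, a + (L.map (d · p)).sum, f) := by
  induction L generalizing a with
  | nil => simp
  | cons i L ih =>
    have hstep : step f (d i) (p, a, f) = (p, a + d i p, f) := by simp [step, view]
    rw [List.foldl_cons, hstep, ih, List.map_cons, List.sum_cons, add_assoc]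

theorem foldl_step_not (f : Bool) (d : ι → G → G) {L : List ι} (hL : L ≠ []) (p a : G) :
    L.foldl (fun s i => step f (d i) s) (p, a, !f) = (a, (L.map (d · a)).sum, f) := by
  obtain ⟨i, L, rfl⟩ := List.exists_cons_of_ne_nil hL
  have hstep : step f (d i) (p, a, !f) = (a, d i a, f) := by simp [step, view]
  rw [List.foldl_cons, hstep, foldl_step_same, List.map_cons, List.sum_cons]

theorem foldl_layers (d : ℕ → ι → G → G) {L : List ι} (hL : L ≠ []) (v : ℕ → G)
    (hv : ∀ t, v (t + 1) = (L.map (d t · (v t))).sum) (t : ℕ) :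
    (List.range (t + 1)).foldl
        (fun s t => L.foldl (fun s i => step t.bodd (d t i) s) s) (v 0, v 0, true) =
      (v t, v (t + 1), t.bodd) := by
  induction t with
  | zero => simpa [hv] using foldl_step_not false (d 0) hL (v 0) (v 0)
  | succ t ih =>
    have htag : t.bodd = !(t + 1).bodd := by simp
    rw [List.range_succ, List.foldl_append, ih, List.foldl_cons, List.foldl_nil, htag,
      foldl_step_not _ _ hL, hv (t + 1)]

end AccState

theorem KOBDD.exists_represents_commutative_of_recursion {G : Type*} [AddCommMonoid G] [Fintype G]
    {n : ℕ} [NeZero n] (d : ℕ → Fin n → Bool → G → G) (v : (Fin n → Bool) → ℕ → G) (v₀ : G)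
    (hv₀ : ∀ x, v x 0 = v₀) (hv : ∀ x t, v x (t + 1) = ∑ i, d t i (x i) (v x t))
    (acc : G → Bool) (t : ℕ) :
    ∃ M : KOBDD (t + 1) n (2 * Fintype.card G ^ 2),
      M.Represents (fun x => acc (v x t)) ∧ M.Commutative := by
  have hcard : Fintype.card (AccState G) = 2 * Fintype.card G ^ 2 := by
    simp only [Fintype.card_prod, Fintype.card_bool]
    ring
  have hL : List.finRange n ≠ [] := by simp [NeZero.ne n]
  refine ⟨.ofEquiv (Fintype.equivFinOfCardEq hcard)
    (fun t i s b => AccState.step (t : ℕ).bodd (d t i b) s) (v₀, v₀, true) (fun s => acc s.1),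
    fun x => ?_, commutative_ofEquiv _ _ _ _ fun t i j s b c => AccState.step_comm _ _ _ s⟩
  have hsum : ∀ t, v x (t + 1) = ((List.finRange n).map fun i => d t i (x i) (v x t)).sum :=
    fun t => by rw [hv, Fin.sum_univ_def]
  have hrun := AccState.foldl_layers (fun t i => d t i (x i)) hL (v x) hsum t
  rw [← List.map_coe_finRange_eq_range, List.foldl_map, hv₀] at hrun
  rw [accepts_ofEquiv, hrun]

/-- The contribution of the value `b` of the variable `i` to the number whose binary digits are the
variables `g 0, …, g (l - 1)`. -/
def bitWeight {ι : Type*} [DecidableEq ι] {l : ℕ} (g : Fin l → ι) (i : ι) (b : Bool) : ℕ :=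
  ∑ j with g j = i, if b then 2 ^ (l - 1 - (j : ℕ)) else 0

theorem sum_bitWeight {ι : Type*} [DecidableEq ι] [Fintype ι] {l : ℕ} (g : Fin l → ι)
    (x : ι → Bool) : ∑ i, bitWeight g i (x i) = binVal l (x ∘ g) := by
  simp only [bitWeight, binVal, Function.comp_apply, Finset.sum_filter]
  rw [Finset.sum_comm]
  simp only [Finset.sum_ite_eq, Finset.mem_univ, if_true]

section PointerJumping

variable {m : ℕ} (hm : 0 < m)

/-- The positions of the bits encoding `f^A(v)` (`side = false`) or `f^B(v)` (`side = true`). -/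
def pjPos (side : Bool) (v : ℕ) (j : Fin (Nat.clog 2 m)) : Fin (2 * m * Nat.clog 2 m) :=
  ⟨pjBlock m side v * Nat.clog 2 m + (j : ℕ), blockIdx (pjBlock_lt hm side v) j⟩

theorem pjPos_mod (side : Bool) (v : ℕ) : pjPos hm side (v % m) = pjPos hm side v := by
  ext j
  simp only [pjPos, pjBlock, Nat.mod_mod]

theorem natCast_pjF (x : Fin (2 * m * Nat.clog 2 m) → Bool) (side : Bool) (v : ℕ) :
    (pjF m hm x side v : ZMod m) =
      ∑ i, (bitWeight (pjPos hm side (v : ZMod m).val) i (x i) : ZMod m) := by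
  rw [ZMod.val_natCast, pjPos_mod, ← Nat.cast_sum, sum_bitWeight]
  exact ZMod.natCast_mod _ m

theorem pjV_lt (x : Fin (2 * m * Nat.clog 2 m) → Bool) : ∀ t, pjV m hm x t < m
  | 0 => hm
  | _ + 1 => Nat.mod_lt _ hm

end PointerJumping

theorem stmt17_general (t m : ℕ) (hm : 2 ≤ m) :
    ∃ M : KOBDD (t + 1) (2 * m * Nat.clog 2 m) (2 * m ^ 2),
      M.Represents (PJ t m (two_pos.trans_le hm)) ∧ M.Commutative := by
  have hm₀ : 0 < m := two_pos.trans_le hm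
  have : NeZero m := ⟨hm₀.ne'⟩
  have : NeZero (Nat.clog 2 m) := ⟨(Nat.clog_pos one_lt_two hm).ne'⟩
  have hM := KOBDD.exists_represents_commutative_of_recursion
    (fun t i b (p : ZMod m) => (bitWeight (pjPos hm₀ (decide (t % 2 = 1)) p.val) i b : ZMod m))
    (fun x t => (pjV m hm₀ x t : ZMod m)) 0 (fun _ => Nat.cast_zero)
    (fun x t => natCast_pjF hm₀ x _ _)
    (fun p => decide ((Nat.digits 2 p.val).sum % 2 = 1)) t
  rw [ZMod.card] at hM
  simp only [ZMod.val_natCast_of_lt (pjV_lt hm₀ _ t)] at hM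
  exact hM

/-- `PJ_{2k−1,m}` has a commutative deterministic 2kOBDD of width `O(m²)`. -/
theorem stmt17 :
    ∃ c : ℕ, 0 < c ∧
      ∀ k m : ℕ, 1 ≤ k → ∀ hm : 2 ≤ m,
        ∃ W : ℕ, W ≤ c * m ^ 2 ∧
          ∃ M : KOBDD (2 * k) (2 * m * Nat.clog 2 m) W,
            M.Represents (PJ (2 * k - 1) m (by omega)) ∧ M.Commutative := by
  refine ⟨2, two_pos, fun k m hk hm => ⟨2 * m ^ 2, le_rfl, ?_⟩⟩
  obtain ⟨t, ht⟩ : ∃ t, 2 * k = t + 1 := ⟨2 * k - 1, by omega⟩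
  exact ht ▸ stmt17_general t m hm
end
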